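/- (Uniqueness part of Theorem 3.1.) Suppose (u₁,…,u_K) and (v₁,…,v_K) are two arrays of functions, where u_k, v_k : [T_{k−1}, T_k] × 𝒮̄ → ℝ are continuous and satisfy 0 ≤ u_k(t,x) ≤ Σ_{i=k}^K w_i G_i and 0 ≤ v_k(t,x) ≤ Σ_{i=k}^K w_i G_i for all (t,x) ∈ [T_{k−1}, T_k] × 𝒮̄, and suppose both arrays are viscosity solutions of the QVI system. Then u_k = v_k on [T_{k−1}, T_k] × 𝒮̄ for every k = 1, …, K. -/

import Mathlib

open Set Filter

/-- The closed positive quadrant of portfolio positions. -/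
def Sbar : Set (ℝ × ℝ) := Set.Ici 0 ×ˢ Set.Ici 0

/-- The positive quadrant without the origin. -/
def Sset : Set (ℝ × ℝ) := Sbar \ {(0, 0)}

/-- A transaction cost function. -/
def IsCostFn (C : ℝ → ℝ) : Prop :=
  Continuous C ∧ (∀ d₁ d₂ : ℝ, |d₁| ≤ |d₂| → C d₁ ≤ C d₂) ∧ 0 < C 0 ∧
    StrictMono (fun d => d + C d) ∧ Set.Ici (0 : ℝ) ⊆ Set.range (fun d => d + C d)

/-- The rebalancing map. -/
def Gam (C : ℝ → ℝ) (x : ℝ × ℝ) (d : ℝ) : ℝ × ℝ := (x.1 - d - C d, x.2 + d)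

/-- The set of feasible transactions. -/
def Dset (C : ℝ → ℝ) (x : ℝ × ℝ) : Set ℝ := {d | Gam C x d ∈ Sbar}

/-- Intervention operator applied to a time-dependent function
`f : ℝ → ℝ × ℝ → ℝ`, with value `+∞` if no transaction is feasible. -/
noncomputable def MopF (C : ℝ → ℝ) (f : ℝ → ℝ × ℝ → ℝ) (p : ℝ × (ℝ × ℝ)) : EReal :=
  ⨅ d ∈ Dset C p.2, ((f p.1 (Gam C p.2 d) : ℝ) : EReal)

/-- Upper semicontinuous envelope of `h` computed on `E`. -/
noncomputable def uscEnv {α : Type*} [TopologicalSpace α]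
    (h : α → EReal) (E : Set α) (z : α) : EReal :=
  Filter.limsup h (nhdsWithin z E)

/-- Lower semicontinuous envelope of `h` computed on `E`. -/
noncomputable def lscEnv {α : Type*} [TopologicalSpace α]
    (h : α → EReal) (E : Set α) (z : α) : EReal :=
  Filter.liminf h (nhdsWithin z E)

/-- The operator `𝓛[φ](t, x₀, x₁)` of the portfolio dynamics, written in terms of
classical partial derivatives of the (curried) test function `φ`. -/
noncomputable def gen (r μ σ : ℝ) (φ : ℝ → ℝ → ℝ → ℝ) (t x₀ x₁ : ℝ) : ℝ :=
  -(deriv (fun s => φ s x₀ x₁) t)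
    - r * x₀ * deriv (fun y => φ t y x₁) x₀
    - μ * x₁ * deriv (fun y => φ t x₀ y) x₁
    - σ ^ 2 / 2 * x₁ ^ 2 * deriv (deriv (fun y => φ t x₀ y)) x₁

/-- The parabolic interior domain `[a, b) × 𝒮` as a subset of `ℝ × ℝ × ℝ`. -/
def domI (a b : ℝ) : Set (ℝ × ℝ × ℝ) :=
  {p | a ≤ p.1 ∧ p.1 < b ∧ (p.2.1, p.2.2) ∈ Sset}

/-- A test function is `C²` on an open neighbourhood of `[a, b) × 𝒮`. -/
def IsTest (a b : ℝ) (φ : ℝ → ℝ → ℝ → ℝ) : Prop :=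
  ∃ U : Set (ℝ × ℝ × ℝ), IsOpen U ∧ domI a b ⊆ U ∧
    ContDiffOn ℝ 2 (fun p : ℝ × ℝ × ℝ => φ p.1 p.2.1 p.2.2) U

/-- An array `v 1, …, v K` (with `v k` understood on `[T (k−1), T k] × 𝒮̄`) is a
viscosity solution of the QVI system: interior sub/supersolution conditions on each
`[T (k−1), T k) × 𝒮`, the coupling conditions at the intermediate deadlines `T k`,
the terminal condition at `T K`, and the boundary condition at the origin.
Envelopes of the intervention operator are computed on `[T (k−1), T k] × 𝒮̄`. -/
def IsQVISol (C : ℝ → ℝ) (r μ σ : ℝ) (K : ℕ) (T : ℕ → ℝ) (w G : ℕ → ℝ)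
    (v : ℕ → ℝ → ℝ × ℝ → ℝ) : Prop :=
  (∀ k, 1 ≤ k → k ≤ K →
    ∀ tb : ℝ, ∀ xb : ℝ × ℝ, tb ∈ Set.Ico (T (k - 1)) (T k) → xb ∈ Sset →
      ∀ φ : ℝ → ℝ → ℝ → ℝ, IsTest (T (k - 1)) (T k) φ →
        ((∀ t ∈ Set.Ico (T (k - 1)) (T k), ∀ x ∈ Sset,
            v k t x - φ t x.1 x.2 ≤ v k tb xb - φ tb xb.1 xb.2) →
          gen r μ σ φ tb xb.1 xb.2 ≤ 0 ∧
          (v k tb xb : EReal)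
            ≤ uscEnv (MopF C (v k)) (Set.Icc (T (k - 1)) (T k) ×ˢ Sbar) (tb, xb)) ∧
        ((∀ t ∈ Set.Ico (T (k - 1)) (T k), ∀ x ∈ Sset,
            v k tb xb - φ tb xb.1 xb.2 ≤ v k t x - φ t x.1 x.2) →
          0 ≤ gen r μ σ φ tb xb.1 xb.2 ∨
          lscEnv (MopF C (v k)) (Set.Icc (T (k - 1)) (T k) ×ˢ Sbar) (tb, xb)
            ≤ (v k tb xb : EReal))) ∧
  (∀ k, 1 ≤ k → k < K → ∀ x ∈ Sset,
    ((v k (T k) x : EReal) ≤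
      min ((sInf {y | ∃ θ : ℝ, 0 ≤ θ ∧ θ ≤ x.1 ∧
            y = w k * max (G k - θ) 0 + v (k + 1) (T k) (x.1 - θ, x.2)} : ℝ) : EReal)
        (uscEnv (MopF C (v k)) (Set.Icc (T (k - 1)) (T k) ×ˢ Sbar) (T k, x))) ∧
    (min ((sInf {y | ∃ θ : ℝ, 0 ≤ θ ∧ θ ≤ x.1 ∧
            y = w k * max (G k - θ) 0 + v (k + 1) (T k) (x.1 - θ, x.2)} : ℝ) : EReal)
        (lscEnv (MopF C (v k)) (Set.Icc (T (k - 1)) (T k) ×ˢ Sbar) (T k, x))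
      ≤ (v k (T k) x : EReal))) ∧
  (∀ x ∈ Sset,
    ((v K (T K) x : EReal) ≤
      min ((w K * max (G K - x.1 - max (x.2 - C (-x.2)) 0) 0 : ℝ) : EReal)
        (uscEnv (MopF C (v K)) (Set.Icc (T (K - 1)) (T K) ×ˢ Sbar) (T K, x))) ∧
    (min ((w K * max (G K - x.1 - max (x.2 - C (-x.2)) 0) 0 : ℝ) : EReal)
        (lscEnv (MopF C (v K)) (Set.Icc (T (K - 1)) (T K) ×ˢ Sbar) (T K, x))
      ≤ (v K (T K) x : EReal))) ∧
  (∀ k, 1 ≤ k → k ≤ K → ∀ t ∈ Set.Icc (T (k - 1)) (T k),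
    v k t (0, 0) = ∑ i ∈ Finset.Icc k K, w i * G i)

/-!
The barrier `g = e^{β(b - t)} (1 + x₀ + x₁)` is coercive, satisfies `𝓛[g] ≥ 1` for large `β`, and
is strictly decreased by every trade. If `u - v - ε g` has a positive maximum, then trading
from the maximum point must be strictly suboptimal for `v`, so that near this point `u` is a
subsolution and `v` a supersolution of the linear equation `𝓛[φ] = 0`.

No doubling of variables is needed to exclude this. Cash only grows at the rate `r`, so on each
slice of constant discounted cash the equation is, in logarithmic coordinates, the heat equation in
one space variable (and an ordinary differential equation where `x₁ = 0`). An explicit caloric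
function approximates `v` on the parabolic boundary of the slice, hence lies below `v` up to the
error by comparison, and `u` is below the same function plus a strict barrier that is negative at
the maximum point. A multiple of a penalty that `𝓛` annihilates and that vanishes exactly on the
slice extends each comparison to a full neighbourhood.

The deadlines are treated by backward induction, the value of the next stage being part of the
terminal condition of the current one.
-/

open Topology

/-! ### The generator and its calculus -/

/-- `HasGenAt r μ σ φ p g`: the uncurried function `φ` is `C²` at `p` and `𝓛[φ](p) = g`. The value
is recorded through derivatives along the coordinate lines. -/
def HasGenAt (r μ σ : ℝ) (φ : ℝ × ℝ × ℝ → ℝ) (p : ℝ × ℝ × ℝ) (g : ℝ) : Prop :=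
  ContDiffAt ℝ 2 φ p ∧ ∃ (φt φx : ℝ) (φy : ℝ → ℝ) (φyy : ℝ),
    HasDerivAt (fun t => φ (t, p.2.1, p.2.2)) φt p.1 ∧
    HasDerivAt (fun x => φ (p.1, x, p.2.2)) φx p.2.1 ∧
    (∀ᶠ y in 𝓝 p.2.2, HasDerivAt (fun y => φ (p.1, p.2.1, y)) (φy y) y) ∧
    HasDerivAt φy φyy p.2.2 ∧
    g = -φt - r * p.2.1 * φx - μ * p.2.2 * φy p.2.2 - σ ^ 2 / 2 * p.2.2 ^ 2 * φyy

namespace HasGenAt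

variable {r μ σ : ℝ} {φ ψ : ℝ × ℝ × ℝ → ℝ} {p : ℝ × ℝ × ℝ} {g g' : ℝ}

theorem gen_eq (h : HasGenAt r μ σ φ p g) :
    gen r μ σ (fun t x y => φ (t, x, y)) p.1 p.2.1 p.2.2 = g := by
  obtain ⟨-, φt, φx, φy, φyy, ht, hx, hy, hyy, rfl⟩ := h
  have hderiv : deriv (fun y => φ (p.1, p.2.1, y)) =ᶠ[𝓝 p.2.2] φy := hy.mono fun y h => h.deriv
  rw [gen, ht.deriv, hx.deriv, hderiv.deriv_eq, hyy.deriv, hderiv.eq_of_nhds]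

theorem congr_of_eventuallyEq (h : HasGenAt r μ σ φ p g) (hψ : ψ =ᶠ[𝓝 p] φ) :
    HasGenAt r μ σ ψ p g := by
  obtain ⟨hφ, φt, φx, φy, φyy, ht, hx, hy, hyy, hg⟩ := h
  have along {f : ℝ → ℝ × ℝ × ℝ} {s : ℝ} (hf : ContinuousAt f s) (hs : f s = p) :
      (fun s => ψ (f s)) =ᶠ[𝓝 s] fun s => φ (f s) :=
    (hs ▸ hf.tendsto).eventually hψ
  have hψy : ∀ᶠ y in 𝓝 p.2.2,
      (fun y => ψ (p.1, p.2.1, y)) =ᶠ[𝓝 y] fun y => φ (p.1, p.2.1, y) :=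
    (along (by fun_prop) rfl).eventuallyEq_nhds
  refine ⟨hφ.congr_of_eventuallyEq hψ, φt, φx, φy, φyy,
    ht.congr_of_eventuallyEq (along (by fun_prop) rfl),
    hx.congr_of_eventuallyEq (along (by fun_prop) rfl), ?_, hyy, hg⟩
  filter_upwards [hy, hψy] with y h₁ h₂ using h₁.congr_of_eventuallyEq h₂

theorem add (hφ : HasGenAt r μ σ φ p g) (hψ : HasGenAt r μ σ ψ p g') :
    HasGenAt r μ σ (fun q => φ q + ψ q) p (g + g') := by
  obtain ⟨hφ, φt, φx, φy, φyy, ht, hx, hy, hyy, rfl⟩ := hφ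
  obtain ⟨hψ, ψt, ψx, ψy, ψyy, ht', hx', hy', hyy', rfl⟩ := hψ
  refine ⟨hφ.add hψ, φt + ψt, φx + ψx, fun y => φy y + ψy y, φyy + ψyy, ht.add ht', hx.add hx',
    ?_, hyy.add hyy', by ring⟩
  filter_upwards [hy, hy'] with y h h' using h.add h'

theorem const_mul (k : ℝ) (hφ : HasGenAt r μ σ φ p g) :
    HasGenAt r μ σ (fun q => k * φ q) p (k * g) := by
  obtain ⟨hφ, φt, φx, φy, φyy, ht, hx, hy, hyy, rfl⟩ := hφ
  exact ⟨contDiffAt_const.mul hφ, k * φt, k * φx, fun y => k * φy y, k * φyy, ht.const_mul k,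
    hx.const_mul k, hy.mono fun y h => h.const_mul k, hyy.const_mul k, by ring⟩

theorem neg (hφ : HasGenAt r μ σ φ p g) : HasGenAt r μ σ (fun q => -φ q) p (-g) := by
  simpa only [neg_one_mul] using hφ.const_mul (-1)

theorem sub (hφ : HasGenAt r μ σ φ p g) (hψ : HasGenAt r μ σ ψ p g') :
    HasGenAt r μ σ (fun q => φ q - ψ q) p (g - g') := by
  simpa only [sub_eq_add_neg] using hφ.add hψ.neg

theorem const (k : ℝ) : HasGenAt r μ σ (fun _ => k) p 0 :=
  ⟨contDiffAt_const, 0, 0, fun _ => 0, 0, hasDerivAt_const _ _, hasDerivAt_const _ _,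
    .of_forall fun _ => hasDerivAt_const _ _, hasDerivAt_const _ _, by ring⟩

theorem time {f : ℝ → ℝ} {f' : ℝ} (hf : ContDiffAt ℝ 2 f p.1) (hf' : HasDerivAt f f' p.1) :
    HasGenAt r μ σ (fun q => f q.1) p (-f') :=
  ⟨hf.fst'', f', 0, fun _ => 0, 0, hf', hasDerivAt_const _ (f p.1),
    .of_forall fun _ => hasDerivAt_const _ (f p.1), hasDerivAt_const _ _, by ring⟩

end HasGenAt

/-! ### Test functions and viscosity supersolutions of the linear equation -/

section TestFunctions

variable {X : Type*} [NormedAddCommGroup X] [NormedSpace ℝ X]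

theorem contDiff_bump_mul [HasContDiffBump X] {p : X} (χ : ContDiffBump p) {n : ℕ}
    {f : X → ℝ} (hf : ∀ q ∈ Metric.closedBall p χ.rOut, ContDiffAt ℝ n f q) :
    ContDiff ℝ n fun q => χ q * f q := by
  refine contDiff_iff_contDiffAt.2 fun q => ?_
  by_cases hq : q ∈ tsupport χ
  · exact χ.contDiffAt.mul (hf q (χ.tsupport_eq ▸ hq))
  · refine (contDiffAt_const (c := 0)).congr_of_eventuallyEq ?_
    filter_upwards [notMem_tsupport_iff_eventuallyEq.1 hq] with x hx
    simp only [hx, Pi.zero_apply, zero_mul]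

/-- A smooth cut-off equal to `1` near `p` interpolates between `φ` and a constant so small that
the minimum at `p` becomes global. -/
theorem exists_contDiff_isMinOn_sub [HasContDiffBump X] {n : ℕ} {D : Set X} {f φ : X → ℝ} {p : X}
    {m : ℝ} (hm : ∀ q ∈ D, m ≤ f q) (hφ : ContDiffAt ℝ n φ p)
    (hmin : IsLocalMinOn (fun q => f q - φ q) D p) :
    ∃ ψ : X → ℝ, ContDiff ℝ n ψ ∧ ψ =ᶠ[𝓝 p] φ ∧ IsMinOn (fun q => f q - ψ q) D p := by
  have hnear : ∀ᶠ q in 𝓝 p, ContDiffAt ℝ n φ q ∧ (q ∈ D → f p - φ p ≤ f q - φ q) :=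
    (hφ.eventually (by simp)).and (eventually_nhdsWithin_iff.1 hmin)
  obtain ⟨ε, hε, hball⟩ := Metric.eventually_nhds_iff_ball.1 hnear
  let χ : ContDiffBump p := ⟨ε / 3, ε / 2, by positivity, by linarith⟩
  have hout {q : X} (hq : dist q p ≤ ε / 2) : q ∈ Metric.ball p ε := by
    rw [Metric.mem_ball]; linarith
  set M := f p - φ p - m with hM
  have hψ : (fun q => χ q * (φ q + M) - M) =ᶠ[𝓝 p] φ := by
    filter_upwards [χ.eventuallyEq_one] with q hq
    rw [hq, Pi.one_apply]; ring
  refine ⟨fun q => χ q * (φ q + M) - M, ?_, hψ, fun q hq => ?_⟩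
  · exact (contDiff_bump_mul χ fun q hq =>
      (hball q (hout hq)).1.add contDiffAt_const).sub contDiff_const
  · change f p - (χ p * (φ p + M) - M) ≤ f q - (χ q * (φ q + M) - M)
    rw [show χ p * (φ p + M) - M = φ p from hψ.eq_of_nhds]
    rcases le_total (dist q p) (ε / 2) with hqp | hqp
    · have hlocal := (hball q (hout hqp)).2 hq
      have hfar : f p - φ p ≤ f q + M := by linarith [hm q hq, hM]
      nlinarith [χ.nonneg (x := q), χ.le_one (x := q)]
    · rw [χ.zero_of_le_dist hqp]
      linarith [hm q hq, hM]

theorem exists_isMaxOn_sub_contDiff_mem [FiniteDimensional ℝ X] {E V : Set X}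
    {f : X → ℝ} {p : X} {M : ℝ} (hE : IsClosed E) (hf : ContinuousOn f E) (hM : ∀ q ∈ E, f q ≤ M)
    (hp : p ∈ E) (hV : V ∈ 𝓝 p) :
    ∃ φ : X → ℝ, ContDiff ℝ 2 φ ∧ ∃ q ∈ E ∩ V, IsMaxOn (fun q => f q - φ q) E q := by
  obtain ⟨χ, hχV, hχK, hχ, -, hχp⟩ := exists_contDiff_tsupport_subset (n := 2) hV
  set N := M - f p + 1 with hN
  have hfar {q : X} (hq : q ∈ E) (hχq : q ∉ tsupport χ) :
      f q - -(N * χ q) < f p - -(N * χ p) := by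
    rw [image_eq_zero_of_notMem_tsupport hχq, hχp]
    linarith [hM q hq, hN]
  have hcont : ContinuousOn (fun q => f q - -(N * χ q)) E :=
    hf.sub (hχ.continuous.const_mul N |>.neg).continuousOn
  obtain ⟨q, hqE, hq⟩ := hcont.exists_isMaxOn' hE hp (by
    rw [eventually_inf_principal]
    filter_upwards [hχK.isCompact.compl_mem_cocompact] with q hq hqE using (hfar hqE hq).le)
  refine ⟨fun q => -(N * χ q), (contDiff_const.mul hχ).neg, q, ⟨hqE, hχV ?_⟩, hq⟩
  exact not_imp_comm.1 (hfar hqE) (not_lt.2 (hq hp))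

end TestFunctions

/-- `f` is a viscosity supersolution of `𝓛[f] = 0` at the points of `S`, tested relative to the
domain `D`. Subsolutions are the functions whose negative is a supersolution. -/
def IsViscSuperOn (r μ σ : ℝ) (D S : Set (ℝ × ℝ × ℝ)) (f : ℝ × ℝ × ℝ → ℝ) : Prop :=
  ∀ p ∈ S, ∀ (φ : ℝ × ℝ × ℝ → ℝ) (g : ℝ), HasGenAt r μ σ φ p g →
    IsLocalMinOn (fun q => f q - φ q) D p → 0 ≤ g

theorem IsViscSuperOn.mono {r μ σ : ℝ} {D S S' : Set (ℝ × ℝ × ℝ)} {f : ℝ × ℝ × ℝ → ℝ}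
    (hf : IsViscSuperOn r μ σ D S f) (h : S' ⊆ S) : IsViscSuperOn r μ σ D S' f :=
  fun p hp => hf p (h hp)

/-! ### Comparison on the zero set of a penalty -/

theorem exists_forall_pos_add_mul {X : Type*} [TopologicalSpace X] [T2Space X] {A : Set X}
    {ψ π : X → ℝ} (hA : IsCompact A) (hψ : ContinuousOn ψ A) (hπ : ContinuousOn π A)
    (hπ₀ : ∀ x ∈ A, 0 ≤ π x) (hpos : ∀ x ∈ A, π x = 0 → 0 < ψ x) :
    ∃ n : ℝ, ∀ x ∈ A, 0 < ψ x + n * π x := by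
  have hB : IsCompact (A ∩ ψ ⁻¹' Iic 0) := hA.of_isClosed_subset
    (hψ.preimage_isClosed_of_isClosed hA.isClosed isClosed_Iic) inter_subset_left
  obtain ⟨δ, hδ, hδπ⟩ := hB.exists_forall_le' (hπ.mono inter_subset_left) (a := 0)
    fun x hx => (hπ₀ x hx.1).lt_of_ne' fun h => (hpos x hx.1 h).not_ge hx.2
  obtain ⟨m, hm⟩ := hA.bddBelow_image hψ
  obtain ⟨n, hn, hnm⟩ : ∃ n : ℝ, 0 ≤ n ∧ 0 < m + n * δ :=
    ⟨(|m| + 1) / δ, by positivity, by rw [div_mul_cancel₀ _ hδ.ne']; linarith [neg_abs_le m]⟩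
  refine ⟨n, fun x hx => ?_⟩
  rcases le_or_gt (ψ x) 0 with h | h
  · have := mul_le_mul_of_nonneg_left (hδπ x ⟨hx, h⟩) hn
    linarith [hm (mem_image_of_mem ψ hx)]
  · have := mul_nonneg hn (hπ₀ x hx)
    linarith

/-- A compact cell `K` of the domain `D`, with relative interior `O ∩ D`, and a penalty `π ≥ 0`
annihilated by `𝓛`. Functions are compared only on the slice `{π = 0}`, the rest of the cell being
discarded by adding a large multiple of `π`. -/
structure IsPenalizedCell (r μ σ : ℝ) (D O K : Set (ℝ × ℝ × ℝ)) (π : ℝ × ℝ × ℝ → ℝ) : Prop where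
  isOpen : IsOpen O
  isCompact : IsCompact K
  inter_subset : O ∩ D ⊆ K
  subset : K ⊆ D
  nonneg : ∀ q ∈ K, 0 ≤ π q
  hasGenAt : ∀ q ∈ K, HasGenAt r μ σ π q 0

/-- The parabolic boundary of the slice `{π = 0}` of the cell `K` with interior `O`, where `t₀` is
the initial time of the cell. -/
def sliceBoundary (O K : Set (ℝ × ℝ × ℝ)) (π : ℝ × ℝ × ℝ → ℝ) (t₀ : ℝ) : Set (ℝ × ℝ × ℝ) :=
  {q ∈ K | q ∉ O ∧ π q = 0 ∧ q.1 ≠ t₀}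

/-- A barrier at `p` for the comparison with `v` on the slice `{π = 0}`: a solution `h` that is
`η`-close to `v` from below on the boundary of the slice, and a function `ω` with `𝓛[ω] ≥ -ε` that
is nonnegative on the boundary but smaller than `-η` at `p`. -/
def HasSliceBarrier (r μ σ : ℝ) (O K : Set (ℝ × ℝ × ℝ)) (π : ℝ × ℝ × ℝ → ℝ) (t₀ ε : ℝ)
    (v : ℝ × ℝ × ℝ → ℝ) (p : ℝ × ℝ × ℝ) : Prop :=
  ∃ (h ω : ℝ × ℝ × ℝ → ℝ) (η : ℝ), (∀ q ∈ K, HasGenAt r μ σ h q 0) ∧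
    (∀ q ∈ K, ∃ g ≥ -ε, HasGenAt r μ σ ω q g) ∧
    (∀ q ∈ sliceBoundary O K π t₀, (h q ≤ v q ∧ v q ≤ h q + η) ∧ 0 ≤ ω q) ∧ ω p + η < 0

namespace IsPenalizedCell

variable {r μ σ : ℝ} {D O K : Set (ℝ × ℝ × ℝ)} {π f Φ : ℝ × ℝ × ℝ → ℝ} {t₀ : ℝ}

theorem continuousOn (hK : IsPenalizedCell r μ σ D O K π) : ContinuousOn π K :=
  fun q hq => (hK.hasGenAt q hq).1.continuousAt.continuousWithinAt

theorem le_of_gen_neg (hK : IsPenalizedCell r μ σ D O K π) (hf : IsViscSuperOn r μ σ D (O ∩ D) f)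
    (hfc : ContinuousOn f K) (hΦ : ∀ q ∈ K, ∃ g < 0, HasGenAt r μ σ Φ q g)
    (hbd : ∀ q ∈ K \ O, π q = 0 → Φ q < f q) :
    ∀ q ∈ K, π q = 0 → Φ q ≤ f q := by
  have hΦc : ContinuousOn Φ K := fun q hq =>
    let ⟨_, _, h⟩ := hΦ q hq
    h.1.continuousAt.continuousWithinAt
  obtain ⟨n, hn⟩ := exists_forall_pos_add_mul (hK.isCompact.diff hK.isOpen)
    ((hfc.sub hΦc).mono sdiff_subset) (hK.continuousOn.mono sdiff_subset)
    (fun q hq => hK.nonneg q hq.1) fun q hq h => sub_pos.2 (hbd q hq h)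
  intro q hq hπ
  obtain ⟨p, hpK, hp⟩ := hK.isCompact.exists_isMinOn ⟨q, hq⟩
    ((hfc.sub hΦc).add (hK.continuousOn.const_smul n))
  have hmin {q : ℝ × ℝ × ℝ} (hq : q ∈ K) : f p - Φ p + n * π p ≤ f q - Φ q + n * π q := hp hq
  suffices 0 ≤ f p - Φ p + n * π p by
    have := hmin hq
    rw [hπ] at this
    linarith
  by_contra! hneg
  have hpO : p ∈ O := not_not.1 fun h => (hn p ⟨hpK, h⟩).not_gt hneg
  obtain ⟨g, hg, hΦp⟩ := hΦ p hpK
  have hsuper := hf p ⟨hpO, hK.subset hpK⟩ _ _ (hΦp.sub ((hK.hasGenAt p hpK).const_mul n)) (by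
    filter_upwards [inter_mem_nhdsWithin D (hK.isOpen.mem_nhds hpO)] with q hq
    linarith [hmin (hK.inter_subset hq.symm)])
  linarith

/-- The subsolution is lowered by a multiple of `exp (-N (t - t₀))`, which hides the initial time
and disappears at later times as `N → ∞`. -/
theorem le_of_le_sliceBoundary (hK : IsPenalizedCell r μ σ D O K π)
    (hf : IsViscSuperOn r μ σ D (O ∩ D) f) (hfc : ContinuousOn f K)
    (hΦ : ∀ q ∈ K, ∃ g ≤ 0, HasGenAt r μ σ Φ q g)
    (hbd : ∀ q ∈ sliceBoundary O K π t₀, Φ q ≤ f q) :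
    ∀ q ∈ K, π q = 0 → t₀ < q.1 → Φ q ≤ f q := by
  have hΦc : ContinuousOn Φ K := fun q hq =>
    let ⟨_, _, h⟩ := hΦ q hq
    h.1.continuousAt.continuousWithinAt
  obtain ⟨m, hm⟩ := hK.isCompact.bddBelow_image (hfc.sub hΦc)
  set B := |m| + 1 with hB
  have hexp (N : ℝ) (q : ℝ × ℝ × ℝ) : HasGenAt r μ σ (fun q => B * Real.exp (-N * (q.1 - t₀))) q
      (N * (B * Real.exp (-N * (q.1 - t₀)))) := by
    have hd : HasDerivAt (fun t => B * Real.exp (-N * (t - t₀)))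
        (B * (Real.exp (-N * (q.1 - t₀)) * (-N * 1))) q.1 :=
      ((((hasDerivAt_id q.1).sub_const t₀).const_mul (-N)).exp).const_mul B
    convert HasGenAt.time (r := r) (μ := μ) (σ := σ) (by fun_prop) hd using 1
    ring
  have hle {N : ℝ} (hN : 0 < N) : ∀ q ∈ K, π q = 0 →
      Φ q - B * Real.exp (-N * (q.1 - t₀)) ≤ f q := by
    refine hK.le_of_gen_neg hf hfc (fun q hq => ?_) fun q hq hπ => ?_
    · obtain ⟨g, hg, hΦq⟩ := hΦ q hq
      exact ⟨_, by linarith [show 0 < N * (B * Real.exp (-N * (q.1 - t₀))) by positivity],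
        hΦq.sub (hexp N q)⟩
    · by_cases ht : q.1 = t₀
      · have : m ≤ f q - Φ q := hm (mem_image_of_mem _ hq.1)
        rw [ht, sub_self, mul_zero, Real.exp_zero]
        linarith [neg_abs_le m, hB]
      · linarith [hbd q ⟨hq.1, hq.2, hπ, ht⟩, show 0 < B * Real.exp (-N * (q.1 - t₀)) by positivity]
  intro q hq hπ ht
  have hlim : Tendsto (fun N : ℝ => Φ q - B * Real.exp (-N * (q.1 - t₀))) atTop (𝓝 (Φ q)) := by
    simpa using (((Real.tendsto_exp_atBot.comp (tendsto_neg_atTop_atBot.atBot_mul_const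
      (sub_pos.2 ht))).const_mul B).const_sub (Φ q))
  exact le_of_tendsto hlim ((eventually_gt_atTop 0).mono fun N hN => hle hN q hq hπ)

theorem le_of_mem_closure (hK : IsPenalizedCell r μ σ D O K π)
    (hf : IsViscSuperOn r μ σ D (O ∩ D) f) (hfc : ContinuousOn f K)
    (hΦ : ∀ q ∈ K, ∃ g ≤ 0, HasGenAt r μ σ Φ q g)
    (hbd : ∀ q ∈ sliceBoundary O K π t₀, Φ q ≤ f q) {p : ℝ × ℝ × ℝ} (hpK : p ∈ K)
    (hp : p ∈ closure {q ∈ K | π q = 0 ∧ t₀ < q.1}) : Φ p ≤ f p := by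
  obtain ⟨_, _, hΦp⟩ := hΦ p hpK
  exact ContinuousWithinAt.closure_le hp hΦp.1.continuousAt.continuousWithinAt
    ((hfc p hpK).mono (sep_subset _ _))
    fun q hq => hK.le_of_le_sliceBoundary hf hfc hΦ hbd q hq.1 hq.2.1 hq.2.2

/-- `v` is compared with `h` from below. Since `u ≤ v + G + const` with equality at `p`, the
subsolution `u` lies below `h + G + ω + const`, and `𝓛[G] ≥ ε` is what makes room for `ω`. -/
theorem not_isMaxOn_sub_sub (hK : IsPenalizedCell r μ σ D O K π) {u v G : ℝ × ℝ × ℝ → ℝ}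
    {ε : ℝ} {p : ℝ × ℝ × ℝ} (hpK : p ∈ K) (hp : p ∈ closure {q ∈ K | π q = 0 ∧ t₀ < q.1})
    (hv : IsViscSuperOn r μ σ D (O ∩ D) v) (hu : IsViscSuperOn r μ σ D (O ∩ D) fun q => -u q)
    (hvc : ContinuousOn v K) (huc : ContinuousOn u K)
    (hG : ∀ q ∈ K, ∃ g ≥ ε, HasGenAt r μ σ G q g)
    (hbarrier : HasSliceBarrier r μ σ O K π t₀ ε v p) :
    ¬ IsMaxOn (fun q => u q - G q - v q) K p := by
  intro hmax
  obtain ⟨h, ω, η, hh, hω, hbd, hneg⟩ := hbarrier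
  have hv_le : h p ≤ v p := hK.le_of_mem_closure hv hvc (fun q hq => ⟨0, le_rfl, hh q hq⟩)
    (fun q hq => (hbd q hq).1.1) hpK hp
  set M := u p - G p - v p with hM
  have hu_le : -(h p + (G p + (ω p + (η + M)))) ≤ -u p := by
    refine hK.le_of_mem_closure hu huc.neg (fun q hq => ?_) (fun q hq => ?_) hpK hp
      (Φ := fun q => -(h q + (G q + (ω q + (η + M)))))
    · obtain ⟨g, hg, hGq⟩ := hG q hq
      obtain ⟨g', hg', hωq⟩ := hω q hq
      exact ⟨_, by linarith, ((hh q hq).add (hGq.add (hωq.add (.const (η + M))))).neg⟩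
    · have : u q - G q - v q ≤ M := hmax hq.1
      linarith [(hbd q hq).1.2, (hbd q hq).2]
  linarith [hM]

end IsPenalizedCell

/-! ### The Dirichlet problem for the heat equation -/

/-- `H` is `C²` and solves the backward heat equation `H_t + κ H_zz = e` on the whole plane. -/
def IsHeatSol (κ : ℝ) (H e : ℝ × ℝ → ℝ) : Prop :=
  ContDiff ℝ 2 H ∧ ∃ Ht Hz Hzz : ℝ × ℝ → ℝ,
    (∀ s, HasDerivAt (fun t => H (t, s.2)) (Ht s) s.1) ∧
    (∀ s, HasDerivAt (fun z => H (s.1, z)) (Hz s) s.2) ∧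
    (∀ s, HasDerivAt (fun z => Hz (s.1, z)) (Hzz s) s.2) ∧
    ∀ s, Ht s + κ * Hzz s = e s

namespace IsHeatSol

variable {κ : ℝ} {H H' e e' : ℝ × ℝ → ℝ}

theorem congr_source (h : IsHeatSol κ H e) (he : ∀ s, e s = e' s) : IsHeatSol κ H e' :=
  funext he ▸ h

theorem add (h : IsHeatSol κ H e) (h' : IsHeatSol κ H' e') :
    IsHeatSol κ (fun s => H s + H' s) fun s => e s + e' s := by
  obtain ⟨hH, Ht, Hz, Hzz, ht, hz, hzz, he⟩ := h
  obtain ⟨hH', Ht', Hz', Hzz', ht', hz', hzz', he'⟩ := h'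
  exact ⟨hH.add hH', fun s => Ht s + Ht' s, fun s => Hz s + Hz' s, fun s => Hzz s + Hzz' s,
    fun s => (ht s).add (ht' s), fun s => (hz s).add (hz' s), fun s => (hzz s).add (hzz' s),
    fun s => by linear_combination he s + he' s⟩

theorem const_mul (k : ℝ) (h : IsHeatSol κ H e) :
    IsHeatSol κ (fun s => k * H s) fun s => k * e s := by
  obtain ⟨hH, Ht, Hz, Hzz, ht, hz, hzz, he⟩ := h
  exact ⟨contDiff_const.mul hH, fun s => k * Ht s, fun s => k * Hz s, fun s => k * Hzz s,
    fun s => (ht s).const_mul k, fun s => (hz s).const_mul k, fun s => (hzz s).const_mul k,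
    fun s => by linear_combination k * he s⟩

theorem add_const (h : IsHeatSol κ H e) (k : ℝ) : IsHeatSol κ (fun s => H s + k) e := by
  obtain ⟨hH, Ht, Hz, Hzz, ht, hz, hzz, he⟩ := h
  exact ⟨hH.add contDiff_const, Ht, Hz, Hzz, fun s => (ht s).add_const k,
    fun s => (hz s).add_const k, hzz, he⟩

theorem mul_separated {a a' b b' b'' : ℝ → ℝ} (ha : ContDiff ℝ 2 a) (hb : ContDiff ℝ 2 b)
    (ha' : ∀ t, HasDerivAt a (a' t) t) (hb' : ∀ z, HasDerivAt b (b' z) z)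
    (hb'' : ∀ z, HasDerivAt b' (b'' z) z) :
    IsHeatSol κ (fun s => a s.1 * b s.2) fun s => a' s.1 * b s.2 + κ * (a s.1 * b'' s.2) :=
  ⟨ha.fst'.mul hb.snd', fun s => a' s.1 * b s.2, fun s => a s.1 * b' s.2, fun s => a s.1 * b'' s.2,
    fun s => (ha' s.1).mul_const (b s.2), fun s => (hb' s.2).const_mul (a s.1),
    fun s => (hb'' s.2).const_mul (a s.1), fun _ => rfl⟩

end IsHeatSol

section PolynomialData

open Polynomial

variable {κ : ℝ}

theorem isHeatSol_eval_mul_eval (a b : ℝ[X]) :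
    IsHeatSol κ (fun s => a.eval s.1 * b.eval s.2) fun s =>
      a.derivative.eval s.1 * b.eval s.2 + κ * (a.eval s.1 * b.derivative.derivative.eval s.2) :=
  .mul_separated (by simpa using a.contDiff_aeval (𝕜 := ℝ) 2)
    (by simpa using b.contDiff_aeval (𝕜 := ℝ) 2) a.hasDerivAt b.hasDerivAt b.derivative.hasDerivAt

theorem exists_derivative_derivative_eq (b : ℝ[X]) :
    ∃ g : ℝ[X], g.derivative.derivative = b ∧ g.eval 0 = 0 ∧ g.eval 1 = 0 := by
  induction b using Polynomial.induction_on' with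
  | add p q hp hq =>
    obtain ⟨g, hg, hg₀, hg₁⟩ := hp
    obtain ⟨g', hg', hg'₀, hg'₁⟩ := hq
    exact ⟨g + g', by simp [hg, hg'], by simp [hg₀, hg'₀], by simp [hg₁, hg'₁]⟩
  | monomial n c =>
    set k := c / ((n + 1) * (n + 2)) with hk
    have hc : k * (n + 2) * (n + 1) = c := by rw [hk]; field_simp
    refine ⟨monomial (n + 2) k - monomial 1 k, ?_, by simp, by simp⟩
    simp [← hc, add_assoc, one_add_one_eq_two]

/-- If `g'' = b / κ` with zero boundary values then `a(t) g(z)` has source `a b + a' g`, and the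
degree of the error in `t` has dropped. -/
theorem exists_isHeatSol_eval_mul_eval (hκ : κ ≠ 0) (a b : ℝ[X]) :
    ∃ H, IsHeatSol κ H (fun s => a.eval s.1 * b.eval s.2) ∧
      (∀ t, H (t, 0) = 0) ∧ ∀ t, H (t, 1) = 0 := by
  induction hn : a.natDegree using Nat.strong_induction_on generalizing a b with
  | _ n ih =>
    obtain ⟨g, hg, hg₀, hg₁⟩ := exists_derivative_derivative_eq (C κ⁻¹ * b)
    have hag := isHeatSol_eval_mul_eval (κ := κ) a g
    have hsource (s : ℝ × ℝ) : κ * (a.eval s.1 * g.derivative.derivative.eval s.2) =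
        a.eval s.1 * b.eval s.2 := by
      rw [hg, eval_mul, eval_C]; field_simp
    by_cases ha : a.natDegree = 0
    · refine ⟨_, hag.congr_source fun s => ?_, fun t => by simp [hg₀], fun t => by simp [hg₁]⟩
      rw [hsource, derivative_of_natDegree_zero ha, eval_zero, zero_mul, zero_add]
    · obtain ⟨H, hH, hH₀, hH₁⟩ := ih _ (hn ▸ natDegree_derivative_lt ha) a.derivative g rfl
      refine ⟨_, (hag.add (hH.const_mul (-1))).congr_source fun s => ?_,
        fun t => by simp [hg₀, hH₀], fun t => by simp [hg₁, hH₁]⟩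
      rw [hsource]; ring

theorem exists_isHeatSol_lateral_eval (hκ : κ ≠ 0) (p q : ℝ[X]) :
    ∃ H, IsHeatSol κ H (fun _ => 0) ∧ (∀ t, H (t, 0) = p.eval t) ∧ ∀ t, H (t, 1) = q.eval t := by
  obtain ⟨H, hH, hH₀, hH₁⟩ := exists_isHeatSol_eval_mul_eval hκ p.derivative (1 - X)
  obtain ⟨H', hH', hH'₀, hH'₁⟩ := exists_isHeatSol_eval_mul_eval hκ q.derivative X
  refine ⟨_, (((isHeatSol_eval_mul_eval p (1 - X)).add (isHeatSol_eval_mul_eval q X)).add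
    ((hH.add hH').const_mul (-1))).congr_source fun s => ?_, fun t => ?_, fun t => ?_⟩
  · simp
  · simp [hH₀, hH'₀]
  · simp [hH₁, hH'₁]

end PolynomialData

/-- `f` is the value at time `t₁` of a solution of the homogeneous backward heat equation that
vanishes on the lateral boundary `z ∈ {0, 1}`. -/
def IsDirichletTrace (κ t₁ : ℝ) (f : ℝ → ℝ) : Prop :=
  ∃ H, IsHeatSol κ H (fun _ => 0) ∧ (∀ t, H (t, 0) = 0) ∧ (∀ t, H (t, 1) = 0) ∧
    ∀ z, H (t₁, z) = f z

namespace IsDirichletTrace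

variable {κ t₁ : ℝ} {f g : ℝ → ℝ}

theorem add (hf : IsDirichletTrace κ t₁ f) (hg : IsDirichletTrace κ t₁ g) :
    IsDirichletTrace κ t₁ fun z => f z + g z := by
  obtain ⟨H, hH, hH₀, hH₁, hHf⟩ := hf
  obtain ⟨H', hH', hH'₀, hH'₁, hH'g⟩ := hg
  exact ⟨_, (hH.add hH').congr_source fun _ => add_zero 0, fun t => by simp [hH₀, hH'₀],
    fun t => by simp [hH₁, hH'₁], fun z => by rw [hHf, hH'g]⟩

theorem const_mul (k : ℝ) (hf : IsDirichletTrace κ t₁ f) :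
    IsDirichletTrace κ t₁ fun z => k * f z := by
  obtain ⟨H, hH, hH₀, hH₁, hHf⟩ := hf
  exact ⟨_, (hH.const_mul k).congr_source fun _ => mul_zero k, fun t => by simp [hH₀],
    fun t => by simp [hH₁], fun z => by rw [hHf]⟩

theorem sin_int_mul (j : ℤ) : IsDirichletTrace κ t₁ fun z => Real.sin (j * (Real.pi * z)) := by
  set lam : ℝ := κ * (j * Real.pi) ^ 2 with hlam
  have hsep := IsHeatSol.mul_separated (κ := κ) (a := fun t => Real.exp (lam * (t - t₁)))
    (b := fun z => Real.sin (j * (Real.pi * z))) (by fun_prop) (by fun_prop)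
    (fun t => (((hasDerivAt_id t).sub_const t₁).const_mul lam).exp)
    (fun z => (((hasDerivAt_id z).const_mul Real.pi).const_mul (j : ℝ)).sin)
    (fun z => ((((hasDerivAt_id z).const_mul Real.pi).const_mul (j : ℝ)).cos).mul_const _)
  refine ⟨_, hsep.congr_source fun s => ?_, fun t => by simp,
    fun t => by simp [Real.sin_int_mul_pi], fun z => by simp⟩
  simp only [hlam, id_eq]; ring

theorem sin_int_mul_mul_cos_pow (n : ℕ) (j : ℤ) : IsDirichletTrace κ t₁ fun z =>
    Real.sin (j * (Real.pi * z)) * Real.cos (Real.pi * z) ^ n := by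
  induction n generalizing j with
  | zero => simpa using sin_int_mul j
  | succ n ih =>
    convert ((ih (j + 1)).add (ih (j - 1))).const_mul (1 / 2) using 2 with z
    push_cast
    rw [add_mul, sub_mul, one_mul, Real.sin_add, Real.sin_sub]
    ring

open Polynomial in
theorem sin_mul_eval_cos (P : ℝ[X]) : IsDirichletTrace κ t₁ fun z =>
    Real.sin (Real.pi * z) * P.eval (Real.cos (Real.pi * z)) := by
  induction P using Polynomial.induction_on' with
  | add p q hp hq =>
    convert hp.add hq using 2 with z
    rw [eval_add, mul_add]
  | monomial n c =>
    convert (sin_int_mul_mul_cos_pow (κ := κ) (t₁ := t₁) n 1).const_mul c using 2 with z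
    rw [eval_monomial, Int.cast_one, one_mul]; ring

end IsDirichletTrace

theorem exists_abs_mul_sub_lt {X : Type*} [TopologicalSpace X] [CompactSpace X] [T2Space X]
    (f g : C(X, ℝ)) (hfg : ∀ x, g x = 0 → f x = 0) {η : ℝ} (hη : 0 < η) :
    ∃ k : C(X, ℝ), ∀ x, |k x * g x - f x| < η := by
  have hf : f ∈ (Ideal.span {g}).closure := by
    rw [← ContinuousMap.idealOfSet_ofIdeal_eq_closure, ContinuousMap.mem_idealOfSet]
    exact fun x hx => hfg x (ContinuousMap.notMem_setOfIdeal.1 hx (Ideal.mem_span_singleton_self g))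
  obtain ⟨b, hb, hfb⟩ := Metric.mem_closure_iff.1 hf η hη
  obtain ⟨k, rfl⟩ := Ideal.mem_span_singleton'.1 hb
  refine ⟨k, fun x => ?_⟩
  rw [abs_sub_comm]
  exact (ContinuousMap.dist_apply_le_dist x).trans_lt hfb

theorem exists_abs_sin_mul_eval_cos_sub_lt {f : ℝ → ℝ} (hf : ContinuousOn f (Icc 0 1))
    (h₀ : f 0 = 0) (h₁ : f 1 = 0) {η : ℝ} (hη : 0 < η) :
    ∃ P : Polynomial ℝ, ∀ z ∈ Icc (0 : ℝ) 1,
      |Real.sin (Real.pi * z) * P.eval (Real.cos (Real.pi * z)) - f z| < η := by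
  have hsin (z : Icc (0 : ℝ) 1) (hz : Real.sin (Real.pi * z) = 0) : f z = 0 := by
    rcases z.2.1.eq_or_lt with h | h
    · rw [← h, h₀]
    rcases z.2.2.eq_or_lt with h' | h'
    · rw [h', h₁]
    exact absurd hz (Real.sin_pos_of_pos_of_lt_pi (mul_pos Real.pi_pos h)
      (mul_lt_of_lt_one_right Real.pi_pos h')).ne'
  obtain ⟨k, hk⟩ := exists_abs_mul_sub_lt ⟨(Icc 0 1).domRestrict f, hf.domRestrict⟩
    ⟨fun z : Icc (0 : ℝ) 1 => Real.sin (Real.pi * z), by fun_prop⟩ hsin (half_pos hη)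
  have hk' : Continuous fun c => IccExtend zero_le_one k (Real.arccos c / Real.pi) :=
    k.continuous.Icc_extend'.comp (Real.continuous_arccos.div_const _)
  obtain ⟨P, hP⟩ := exists_polynomial_near_of_continuousOn (-1) 1 _ hk'.continuousOn _ (half_pos hη)
  refine ⟨P, fun z hz => ?_⟩
  have harccos : Real.arccos (Real.cos (Real.pi * z)) / Real.pi = z := by
    rw [Real.arccos_cos (mul_nonneg Real.pi_pos.le hz.1)
      (mul_le_of_le_one_right Real.pi_pos.le hz.2), mul_div_cancel_left₀ _ Real.pi_ne_zero]
  have hPz := hP (Real.cos (Real.pi * z)) ⟨Real.neg_one_le_cos _, Real.cos_le_one _⟩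
  rw [harccos, IccExtend_of_mem _ _ hz] at hPz
  calc |Real.sin (Real.pi * z) * P.eval (Real.cos (Real.pi * z)) - f z|
      = |Real.sin (Real.pi * z) * (P.eval (Real.cos (Real.pi * z)) - k ⟨z, hz⟩) +
          (k ⟨z, hz⟩ * Real.sin (Real.pi * z) - f z)| := by ring_nf
    _ ≤ |Real.sin (Real.pi * z)| * |P.eval (Real.cos (Real.pi * z)) - k ⟨z, hz⟩| +
          |k ⟨z, hz⟩ * Real.sin (Real.pi * z) - f z| := (abs_add_le _ _).trans_eq (by rw [abs_mul])
    _ ≤ 1 * |P.eval (Real.cos (Real.pi * z)) - k ⟨z, hz⟩| +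
          |k ⟨z, hz⟩ * Real.sin (Real.pi * z) - f z| := by gcongr; exact Real.abs_sin_le_one _
    _ < η := by
      have : |k ⟨z, hz⟩ * Real.sin (Real.pi * z) - f z| < η / 2 := hk ⟨z, hz⟩
      linarith

theorem exists_isDirichletTrace_abs_sub_lt {κ t₁ : ℝ} {f : ℝ → ℝ} (hf : ContinuousOn f (Icc 0 1))
    {η : ℝ} (h₀ : |f 0| < η) (h₁ : |f 1| < η) :
    ∃ F, IsDirichletTrace κ t₁ F ∧ ∀ z ∈ Icc (0 : ℝ) 1, |F z - f z| < 2 * η := by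
  have hη : 0 < η := (abs_nonneg _).trans_lt h₀
  obtain ⟨P, hP⟩ := exists_abs_sin_mul_eval_cos_sub_lt
    (f := fun z => f z - ((1 - z) * f 0 + z * f 1)) (hf.sub (by fun_prop)) (by simp) (by simp) hη
  refine ⟨_, .sin_mul_eval_cos P, fun z hz => ?_⟩
  have := hP z hz
  rw [abs_lt] at h₀ h₁ this ⊢
  obtain ⟨hz₀, hz₁⟩ := hz
  constructor <;> nlinarith

/-- Polynomial lateral data are met exactly, and then so is, up to a small error, the terminal
datum that remains, because it nearly vanishes at both ends. -/
theorem exists_isHeatSol_abs_sub_lt {κ t₀ t₁ : ℝ} (hκ : κ ≠ 0) (ht : t₀ ≤ t₁) {g : ℝ × ℝ → ℝ}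
    (hg : ContinuousOn g (Icc t₀ t₁ ×ˢ Icc 0 1)) {η : ℝ} (hη : 0 < η) :
    ∃ H, IsHeatSol κ H (fun _ => 0) ∧ ∀ s ∈ Icc t₀ t₁ ×ˢ Icc (0 : ℝ) 1,
      s.1 = t₁ ∨ s.2 = 0 ∨ s.2 = 1 → |H s - g s| < η := by
  have ht₁ : t₁ ∈ Icc t₀ t₁ := right_mem_Icc.2 ht
  obtain ⟨p, hp⟩ := exists_polynomial_near_of_continuousOn t₀ t₁ (fun t => g (t, 0))
    (hg.comp (by fun_prop) fun t ht => ⟨ht, by simp⟩) _ (half_pos hη)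
  obtain ⟨q, hq⟩ := exists_polynomial_near_of_continuousOn t₀ t₁ (fun t => g (t, 1))
    (hg.comp (by fun_prop) fun t ht => ⟨ht, by simp⟩) _ (half_pos hη)
  obtain ⟨H, hH, hH₀, hH₁⟩ := exists_isHeatSol_lateral_eval hκ p q
  have hrest : ContinuousOn (fun z => g (t₁, z) - H (t₁, z)) (Icc 0 1) :=
    (hg.comp (by fun_prop) fun z hz => ⟨ht₁, hz⟩).sub
      (hH.1.continuous.comp (Continuous.prodMk_right t₁)).continuousOn
  obtain ⟨F, ⟨H', hH', hH'₀, hH'₁, hH'F⟩, hF⟩ := exists_isDirichletTrace_abs_sub_lt (κ := κ)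
    (t₁ := t₁) hrest (by rw [hH₀, abs_sub_comm]; exact hp t₁ ht₁)
    (by rw [hH₁, abs_sub_comm]; exact hq t₁ ht₁)
  refine ⟨_, (hH.add hH').congr_source fun _ => add_zero 0, ?_⟩
  rintro ⟨t, z⟩ ⟨ht, hz⟩ (rfl | rfl | rfl)
  · have := hF z hz
    rw [← hH'F] at this
    simpa only [add_comm, sub_sub_eq_add_sub, mul_div_cancel₀ η (two_ne_zero' ℝ)] using this
  · simpa only [hH₀, hH'₀, add_zero] using (hp t ht).trans (half_lt_self hη)
  · simpa only [hH₁, hH'₁, add_zero] using (hq t ht).trans (half_lt_self hη)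

theorem exists_isHeatSol_le_and_le {κ t₀ t₁ : ℝ} (hκ : κ ≠ 0) (ht : t₀ ≤ t₁) {g : ℝ × ℝ → ℝ}
    (hg : ContinuousOn g (Icc t₀ t₁ ×ˢ Icc 0 1)) {η : ℝ} (hη : 0 < η) :
    ∃ H, IsHeatSol κ H (fun _ => 0) ∧ ∀ s ∈ Icc t₀ t₁ ×ˢ Icc (0 : ℝ) 1,
      s.1 = t₁ ∨ s.2 = 0 ∨ s.2 = 1 → H s ≤ g s ∧ g s ≤ H s + η := by
  obtain ⟨H, hH, hHg⟩ := exists_isHeatSol_abs_sub_lt hκ ht hg (half_pos hη)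
  refine ⟨_, hH.add_const (-(η / 2)), fun s hs hb => ?_⟩
  have := abs_lt.1 (hHg s hs hb)
  constructor <;> linarith

/-! ### Logarithmic coordinates -/

theorem hasDerivAt_comp_prodMk {H : ℝ × ℝ → ℝ} {Z : ℝ → ℝ} {t Ht Hz Z' : ℝ}
    (hH : DifferentiableAt ℝ H (t, Z t)) (ht : HasDerivAt (fun s => H (s, Z t)) Ht t)
    (hz : HasDerivAt (fun z => H (t, z)) Hz (Z t)) (hZ : HasDerivAt Z Z' t) :
    HasDerivAt (fun s => H (s, Z s)) (Ht + Z' * Hz) t := by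
  have hfst : fderiv ℝ H (t, Z t) (1, 0) = Ht :=
    (hH.hasFDerivAt.comp_hasDerivAt (f := fun s => (s, Z t)) t
      ((hasDerivAt_id t).prodMk (hasDerivAt_const t (Z t)))).unique ht
  have hsnd : fderiv ℝ H (t, Z t) (0, 1) = Hz :=
    (hH.hasFDerivAt.comp_hasDerivAt (f := fun z => (t, z)) (Z t)
      ((hasDerivAt_const (Z t) t).prodMk (hasDerivAt_id (Z t)))).unique hz
  have hmap : fderiv ℝ H (t, Z t) (1, Z') = Ht + Z' * Hz := by
    rw [← hfst, ← hsnd, ← smul_eq_mul, ← map_smul, ← map_add]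
    simp
  exact hmap ▸ hH.hasFDerivAt.comp_hasDerivAt t ((hasDerivAt_id t).prodMk hZ)

/-- The affinely rescaled logarithm of the risky holdings, along which `𝓛` becomes a backward heat
operator when `m = μ - σ² / 2` is the drift of the logarithm. -/
noncomputable def logCoord (m c L : ℝ) (q : ℝ × ℝ × ℝ) : ℝ := (Real.log q.2.2 - m * q.1 - c) / L

theorem contDiffAt_logCoord {m c L : ℝ} {q : ℝ × ℝ × ℝ} (hq : q.2.2 ≠ 0) {n : WithTop ℕ∞} :
    ContDiffAt ℝ n (logCoord m c L) q :=
  ((((Real.contDiffAt_log.2 hq).comp q (by fun_prop : ContDiffAt ℝ n (fun q => q.2.2) q)).sub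
    (by fun_prop)).sub contDiffAt_const).div_const L

theorem IsHeatSol.hasGenAt_logCoord {r μ σ κ L : ℝ} {H e : ℝ × ℝ → ℝ} (h : IsHeatSol κ H e)
    (hL : L ≠ 0) (hκ : κ = σ ^ 2 / 2 / L ^ 2) (c : ℝ) {p : ℝ × ℝ × ℝ} (hp : 0 < p.2.2) :
    HasGenAt r μ σ (fun q => H (q.1, logCoord (μ - σ ^ 2 / 2) c L q)) p
      (-e (p.1, logCoord (μ - σ ^ 2 / 2) c L p)) := by
  obtain ⟨hH, Ht, Hz, Hzz, ht, hz, hzz, he⟩ := h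
  obtain ⟨t, x, y⟩ := p
  set m := μ - σ ^ 2 / 2 with hm
  set Z : ℝ → ℝ → ℝ := fun t y => logCoord m c L (t, x, y)
  have hZt : HasDerivAt (fun s => Z s y) (-(m * 1) / L) t :=
    ((((hasDerivAt_id t).const_mul m).const_sub (Real.log y)).sub_const c).div_const L
  have hZy {y' : ℝ} (hy' : 0 < y') : HasDerivAt (Z t) (y'⁻¹ / L) y' :=
    (((Real.hasDerivAt_log hy'.ne').sub_const (m * t)).sub_const c).div_const L
  refine ⟨hH.contDiffAt.comp _ (contDiffAt_fst.prodMk (contDiffAt_logCoord hp.ne')),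
    Ht (t, Z t y) + -(m * 1) / L * Hz (t, Z t y), 0, fun y => Hz (t, Z t y) * (y⁻¹ / L),
    Hzz (t, Z t y) * (y⁻¹ / L) * (y⁻¹ / L) + Hz (t, Z t y) * (-(y ^ 2)⁻¹ / L),
    ?_, hasDerivAt_const x (H (t, Z t y)), ?_, ?_, ?_⟩
  · exact hasDerivAt_comp_prodMk (hH.differentiable (by norm_num) _) (ht (t, Z t y))
      (hz (t, Z t y)) hZt
  · exact (lt_mem_nhds hp).mono fun y' hy' =>
      HasDerivAt.comp (h₂ := fun z => H (t, z)) y' (hz (t, Z t y')) (hZy hy')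
  · exact ((hzz (t, Z t y)).comp y (hZy hp)).mul ((hasDerivAt_inv hp.ne').div_const L)
  · have hy : y ≠ 0 := hp.ne'
    change -e (t, Z t y) = -(Ht (t, Z t y) + -(m * 1) / L * Hz (t, Z t y)) - r * x * 0 -
      μ * y * (Hz (t, Z t y) * (y⁻¹ / L)) - σ ^ 2 / 2 * y ^ 2 *
        (Hzz (t, Z t y) * (y⁻¹ / L) * (y⁻¹ / L) + Hz (t, Z t y) * (-(y ^ 2)⁻¹ / L))
    rw [← he, hκ, hm]
    field_simp
    ring

/-! ### The strict maximum principle -/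

/-- Discounting of the cash at the rate `r` and of the risky holdings at the rate `m`. -/
noncomputable def discount (r m : ℝ) : ℝ × ℝ × ℝ ≃ₜ ℝ × ℝ × ℝ where
  toFun q := (q.1, q.2.1 * Real.exp (-(r * q.1)), q.2.2 * Real.exp (-(m * q.1)))
  invFun q := (q.1, q.2.1 * Real.exp (r * q.1), q.2.2 * Real.exp (m * q.1))
  left_inv q := by simp [mul_assoc, ← Real.exp_add]
  right_inv q := by simp [mul_assoc, ← Real.exp_add]
  continuous_toFun := by fun_prop
  continuous_invFun := by fun_prop

/-- The part of a ball of radius `ρ` about `p`, in discounted coordinates, lying in the quadrant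
and not before the time of `p`. -/
def cell (r m : ℝ) (p : ℝ × ℝ × ℝ) (ρ : ℝ) : Set (ℝ × ℝ × ℝ) :=
  {q | discount r m q ∈ Metric.closedBall (discount r m p) ρ ∧ p.1 ≤ q.1 ∧ q.2 ∈ Sbar}

/-- The open set cutting out the parabolic interior of `cell r m p ρ`. -/
def cellInterior (r m : ℝ) (p : ℝ × ℝ × ℝ) (ρ : ℝ) : Set (ℝ × ℝ × ℝ) :=
  {q | discount r m q ∈ Metric.ball (discount r m p) ρ ∧ p.1 < q.1}

section Cell

variable {r m μ σ ρ : ℝ} {p q : ℝ × ℝ × ℝ} {D N : Set (ℝ × ℝ × ℝ)} {π v : ℝ × ℝ × ℝ → ℝ}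

theorem isCompact_cell : IsCompact (cell r m p ρ) :=
  ((discount r m).isCompact_preimage.2 (isCompact_closedBall _ ρ)).inter_right
    ((isClosed_le continuous_const continuous_fst).inter
      ((isClosed_Ici.prod isClosed_Ici).preimage continuous_snd))

theorem isOpen_cellInterior : IsOpen (cellInterior r m p ρ) :=
  (Metric.isOpen_ball.preimage (discount r m).continuous).inter
    (isOpen_lt continuous_const continuous_fst)

theorem self_mem_cell (hp : p.2 ∈ Sbar) (hρ : 0 ≤ ρ) : p ∈ cell r m p ρ :=
  ⟨Metric.mem_closedBall_self hρ, le_rfl, hp⟩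

theorem dist_le_of_mem_cell (hq : q ∈ cell r m p ρ) :
    |q.1 - p.1| ≤ ρ ∧ |(discount r m q).2.2 - (discount r m p).2.2| ≤ ρ := by
  have h : dist q.1 p.1 ≤ ρ ∧ dist (discount r m q).2 (discount r m p).2 ≤ ρ := max_le_iff.1 hq.1
  exact ⟨h.1, (max_le_iff.1 h.2).2⟩

theorem isPenalizedCell_cell {a b : ℝ} (hD : cell r m p ρ ⊆ domI a b)
    (hπ₀ : ∀ q, 0 ≤ π q) (hπ : ∀ q, HasGenAt r μ σ π q 0) :
    IsPenalizedCell r μ σ (domI a b) (cellInterior r m p ρ) (cell r m p ρ) π where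
  isOpen := isOpen_cellInterior
  isCompact := isCompact_cell
  inter_subset _ hq := ⟨Metric.ball_subset_closedBall hq.1.1, hq.1.2.le, hq.2.2.2.1⟩
  subset := hD
  nonneg q _ := hπ₀ q
  hasGenAt q _ := hπ q

theorem eventually_cell_subset {a b : ℝ} (hp : p ∈ domI a b) (hN : N ∈ 𝓝 p) :
    ∀ᶠ ρ in 𝓝[>] (0 : ℝ), cell r m p ρ ⊆ domI a b ∩ N := by
  have hnhds : N ∩ ({q | q.1 < b} ∩ {q | q.2 ≠ (0, 0)}) ∈ 𝓝 p :=
    inter_mem hN (inter_mem ((isOpen_lt continuous_fst continuous_const).mem_nhds hp.2.1)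
      ((isOpen_ne.preimage continuous_snd).mem_nhds hp.2.2.2))
  rw [← (discount r m).symm_apply_apply p] at hnhds
  obtain ⟨ε, hε, hball⟩ := Metric.nhds_basis_closedBall.mem_iff.1
    ((discount r m).symm.continuous.continuousAt.preimage_mem_nhds hnhds)
  filter_upwards [Ioo_mem_nhdsGT hε] with ρ hρ q hq
  have hqN := hball (Metric.closedBall_subset_closedBall hρ.2.le hq.1)
  rw [mem_preimage, Homeomorph.symm_apply_apply] at hqN
  exact ⟨⟨hp.1.trans hq.2.1, hqN.2.1, hq.2.2, hqN.2.2⟩, hqN.1⟩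

theorem mem_closure_cell_slice (hp : p.2 ∈ Sbar) (hρ : 0 < ρ)
    (hπ : ∀ q, (discount r m q).2 = (discount r m p).2 → π q = 0) :
    p ∈ closure {q ∈ cell r m p ρ | π q = 0 ∧ p.1 < q.1} := by
  let path : ℝ → ℝ × ℝ × ℝ := fun t => (discount r m).symm (t, (discount r m p).2)
  have hpath : Continuous path := (discount r m).symm.continuous.comp (by fun_prop)
  have hp₁ : p.1 ∈ closure (Ioo p.1 (p.1 + ρ)) := by
    rw [closure_Ioo (by linarith)]
    exact left_mem_Icc.2 (by linarith)
  convert map_mem_closure hpath hp₁ fun t ht => ?_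
  · exact ((discount r m).symm_apply_apply p).symm
  · have hdisc : discount r m (path t) = (t, (discount r m p).2) :=
      (discount r m).apply_symm_apply _
    refine ⟨⟨?_, ht.1.le, ?_⟩, hπ _ (by rw [hdisc]), ht.1⟩
    · rw [hdisc]
      refine max_le ?_ ((dist_self _).trans_le hρ.le)
      change |t - p.1| ≤ ρ
      rw [abs_of_nonneg (by linarith [ht.1])]
      linarith [ht.2]
    · have h₁ : 0 ≤ p.2.1 := hp.1
      have h₂ : 0 ≤ p.2.2 := hp.2
      exact ⟨by change 0 ≤ p.2.1 * _ * _; positivity, by change 0 ≤ p.2.2 * _ * _; positivity⟩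

theorem of_mem_sliceBoundary_cell
    (hq : q ∈ sliceBoundary (cellInterior r m p ρ) (cell r m p ρ) π p.1)
    (hcash : (discount r m q).2.1 = (discount r m p).2.1) :
    q.1 = p.1 + ρ ∨ |(discount r m q).2.2 - (discount r m p).2.2| = ρ := by
  obtain ⟨hqK, hqO, -, ht⟩ := hq
  have hlt : p.1 < q.1 := lt_of_le_of_ne hqK.2.1 (Ne.symm ht)
  have hdist : dist (discount r m q) (discount r m p) = ρ :=
    hqK.1.antisymm (not_lt.1 fun h => hqO ⟨h, hlt⟩)
  have hcash' : dist (discount r m q).2.1 (discount r m p).2.1 = 0 := by rw [hcash, dist_self]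
  rw [Prod.dist_eq, Prod.dist_eq, hcash', max_eq_right (a := 0) dist_nonneg] at hdist
  have htime : dist (discount r m q).1 (discount r m p).1 = q.1 - p.1 :=
    abs_of_pos (sub_pos.2 hlt)
  rcases max_choice (dist (discount r m q).1 (discount r m p).1)
    (dist (discount r m q).2.2 (discount r m p).2.2) with h | h
  · left; linarith
  · exact .inr (h.symm.trans hdist)

end Cell

section Penalty

variable {r m μ σ : ℝ}

theorem hasGenAt_sq_discount_cash_sub (X : ℝ) (q : ℝ × ℝ × ℝ) :
    HasGenAt r μ σ (fun q => ((discount r m q).2.1 - X) ^ 2) q 0 := by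
  obtain ⟨t, x, y⟩ := q
  change HasGenAt r μ σ (fun q => (q.2.1 * Real.exp (-(r * q.1)) - X) ^ 2) (t, x, y) 0
  have hexp : HasDerivAt (fun s => Real.exp (-(r * s))) (Real.exp (-(r * t)) * -(r * 1)) t :=
    ((hasDerivAt_id t).const_mul r).neg.exp
  have hcash : HasDerivAt (fun x => x * Real.exp (-(r * t)) - X) (1 * Real.exp (-(r * t))) x :=
    ((hasDerivAt_id x).mul_const _).sub_const X
  refine ⟨by fun_prop, _, _, fun _ => 0, 0, ((hexp.const_mul x).sub_const X).pow 2, hcash.pow 2,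
    .of_forall fun y => hasDerivAt_const y ((x * Real.exp (-(r * t)) - X) ^ 2),
    hasDerivAt_const y 0, ?_⟩
  ring

theorem hasGenAt_sq_mul_exp (q : ℝ × ℝ × ℝ) :
    HasGenAt r μ σ (fun q => q.2.2 ^ 2 * Real.exp (-((2 * μ + σ ^ 2) * q.1))) q 0 := by
  obtain ⟨t, x, y⟩ := q
  have hexp : HasDerivAt (fun s => Real.exp (-((2 * μ + σ ^ 2) * s)))
      (Real.exp (-((2 * μ + σ ^ 2) * t)) * -((2 * μ + σ ^ 2) * 1)) t :=
    ((hasDerivAt_id t).const_mul _).neg.exp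
  refine ⟨by fun_prop, _, 0, fun y => 2 * y * Real.exp (-((2 * μ + σ ^ 2) * t)),
    2 * 1 * Real.exp (-((2 * μ + σ ^ 2) * t)), hexp.const_mul (y ^ 2),
    hasDerivAt_const x (y ^ 2 * Real.exp (-((2 * μ + σ ^ 2) * t))), .of_forall fun y => ?_,
    ((hasDerivAt_id y).const_mul 2).mul_const _, ?_⟩
  · simpa using (hasDerivAt_pow 2 y).mul_const (Real.exp (-((2 * μ + σ ^ 2) * t)))
  · ring

end Penalty

section CellCoord

variable {r m ρ : ℝ} {p q : ℝ × ℝ × ℝ}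

/-- The logarithmic coordinate rescaled so that `cell r m p ρ` occupies the unit interval. -/
noncomputable def cellCoord (r m : ℝ) (p : ℝ × ℝ × ℝ) (ρ : ℝ) : ℝ × ℝ × ℝ → ℝ :=
  logCoord m (Real.log ((discount r m p).2.2 - ρ))
    (Real.log ((discount r m p).2.2 + ρ) - Real.log ((discount r m p).2.2 - ρ))

theorem log_sub_lt_log_add (hρ : 0 < ρ) (hρp : ρ < (discount r m p).2.2) :
    Real.log ((discount r m p).2.2 - ρ) < Real.log ((discount r m p).2.2 + ρ) :=
  Real.log_lt_log (by linarith) (by linarith)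

theorem discount_risky_mem_Icc (hq : q ∈ cell r m p ρ) :
    (discount r m q).2.2 ∈ Icc ((discount r m p).2.2 - ρ) ((discount r m p).2.2 + ρ) := by
  have h := abs_le.1 (dist_le_of_mem_cell hq).2
  exact ⟨by linarith [h.1], by linarith [h.2]⟩

theorem risky_pos_of_mem_cell (hρp : ρ < (discount r m p).2.2) (hq : q ∈ cell r m p ρ) :
    0 < q.2.2 :=
  (mul_pos_iff_of_pos_right (Real.exp_pos _)).1
    ((sub_pos.2 hρp).trans_le (discount_risky_mem_Icc hq).1)

theorem cellCoord_eq (hq : 0 < q.2.2) :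
    cellCoord r m p ρ q =
      (Real.log (discount r m q).2.2 - Real.log ((discount r m p).2.2 - ρ)) /
        (Real.log ((discount r m p).2.2 + ρ) - Real.log ((discount r m p).2.2 - ρ)) := by
  have hlog : Real.log (discount r m q).2.2 = Real.log q.2.2 - m * q.1 := by
    change Real.log (q.2.2 * Real.exp (-(m * q.1))) = _
    rw [Real.log_mul hq.ne' (Real.exp_pos _).ne', Real.log_exp, sub_eq_add_neg]
  rw [cellCoord, logCoord, hlog]

theorem cellCoord_mem_Icc (hρ : 0 < ρ) (hρp : ρ < (discount r m p).2.2)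
    (hq : q ∈ cell r m p ρ) : cellCoord r m p ρ q ∈ Icc 0 1 := by
  obtain ⟨h₁, h₂⟩ := discount_risky_mem_Icc hq
  have hlog := log_sub_lt_log_add hρ hρp
  have hlow : 0 < (discount r m p).2.2 - ρ := sub_pos.2 hρp
  rw [cellCoord_eq (risky_pos_of_mem_cell hρp hq)]
  exact ⟨div_nonneg (sub_nonneg.2 (Real.log_le_log hlow h₁)) (sub_nonneg.2 hlog.le),
    (div_le_one (sub_pos.2 hlog)).2
      (sub_le_sub_right (Real.log_le_log (hlow.trans_le h₁) h₂) _)⟩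

theorem cellCoord_self_mem_Ioo (hρ : 0 < ρ) (hρp : ρ < (discount r m p).2.2) (hp : 0 < p.2.2) :
    cellCoord r m p ρ p ∈ Ioo 0 1 := by
  have hlog := log_sub_lt_log_add hρ hρp
  rw [cellCoord_eq hp]
  exact ⟨div_pos (sub_pos.2 (Real.log_lt_log (sub_pos.2 hρp) (by linarith))) (sub_pos.2 hlog),
    (div_lt_one (sub_pos.2 hlog)).2
      (sub_lt_sub_right (Real.log_lt_log (hρ.trans hρp) (by linarith)) _)⟩

theorem cellCoord_eq_zero_or_one (hρ : 0 < ρ) (hρp : ρ < (discount r m p).2.2)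
    (hq : q ∈ cell r m p ρ) (h : |(discount r m q).2.2 - (discount r m p).2.2| = ρ) :
    cellCoord r m p ρ q = 0 ∨ cellCoord r m p ρ q = 1 := by
  rw [cellCoord_eq (risky_pos_of_mem_cell hρp hq)]
  rcases eq_or_eq_neg_of_abs_eq h with h | h
  · rw [show (discount r m q).2.2 = (discount r m p).2.2 + ρ by linarith,
      div_self (sub_pos.2 (log_sub_lt_log_add hρ hρp)).ne']
    exact .inr rfl
  · rw [show (discount r m q).2.2 = (discount r m p).2.2 - ρ by linarith, sub_self, zero_div]
    exact .inl rfl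

/-- The parametrization of the slice of constant discounted cash through `p` by time and
`cellCoord`. -/
noncomputable def sliceParam (r m : ℝ) (p : ℝ × ℝ × ℝ) (ρ : ℝ) (s : ℝ × ℝ) : ℝ × ℝ × ℝ :=
  (discount r m).symm (s.1, (discount r m p).2.1,
    Real.exp (Real.log ((discount r m p).2.2 - ρ) + s.2 *
      (Real.log ((discount r m p).2.2 + ρ) - Real.log ((discount r m p).2.2 - ρ))))

theorem continuous_sliceParam : Continuous (sliceParam r m p ρ) :=
  (discount r m).symm.continuous.comp (by fun_prop)

theorem mapsTo_sliceParam (hp : p.2 ∈ Sbar) (hρ : 0 < ρ) (hρp : ρ < (discount r m p).2.2) :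
    MapsTo (sliceParam r m p ρ) (Icc p.1 (p.1 + ρ) ×ˢ Icc 0 1) (cell r m p ρ) := by
  intro s hs
  obtain ⟨⟨ht, ht'⟩, hz, hz'⟩ : (p.1 ≤ s.1 ∧ s.1 ≤ p.1 + ρ) ∧ 0 ≤ s.2 ∧ s.2 ≤ 1 := hs
  have hlog := log_sub_lt_log_add hρ hρp
  refine ⟨?_, ht, ?_, ?_⟩
  · rw [sliceParam, Homeomorph.apply_symm_apply]
    refine max_le ?_ (max_le ((dist_self _).trans_le hρ.le) ?_)
    · exact abs_le.2 ⟨by change -ρ ≤ s.1 - p.1; linarith, by change s.1 - p.1 ≤ ρ; linarith⟩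
    · rw [Real.dist_eq, abs_le]
      constructor
      · rw [neg_le_sub_iff_le_add, ← sub_le_iff_le_add, ← Real.log_le_iff_le_exp (sub_pos.2 hρp)]
        nlinarith
      · rw [sub_le_iff_le_add', ← Real.le_log_iff_exp_le (by linarith)]
        nlinarith
  · have : 0 ≤ p.2.1 := hp.1
    change 0 ≤ p.2.1 * _ * _
    positivity
  · change 0 ≤ Real.exp _ * _
    positivity

theorem sliceParam_cellCoord (hρ : 0 < ρ) (hρp : ρ < (discount r m p).2.2)
    (hq : q ∈ cell r m p ρ) (hcash : (discount r m q).2.1 = (discount r m p).2.1) :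
    sliceParam r m p ρ (q.1, cellCoord r m p ρ q) = q := by
  refine (Homeomorph.symm_apply_eq _).2 (Prod.ext rfl (Prod.ext hcash.symm ?_))
  rw [cellCoord_eq (risky_pos_of_mem_cell hρp hq),
    div_mul_cancel₀ _ (sub_pos.2 (log_sub_lt_log_add hρ hρp)).ne', add_sub_cancel,
    Real.exp_log ((sub_pos.2 hρp).trans_le (discount_risky_mem_Icc hq).1)]

theorem exists_pos_hasGenAt_cellCoord {μ σ : ℝ} (hσ : σ ≠ 0) (hρ : 0 < ρ)
    (hρp : ρ < (discount r (μ - σ ^ 2 / 2) p).2.2) :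
    ∃ κ > 0, ∀ {H e : ℝ × ℝ → ℝ}, IsHeatSol κ H e → ∀ {q}, q ∈ cell r (μ - σ ^ 2 / 2) p ρ →
      HasGenAt r μ σ (fun q => H (q.1, cellCoord r (μ - σ ^ 2 / 2) p ρ q)) q
        (-e (q.1, cellCoord r (μ - σ ^ 2 / 2) p ρ q)) := by
  have hL := sub_pos.2 (log_sub_lt_log_add hρ hρp)
  exact ⟨_, by positivity, fun h q hq =>
    h.hasGenAt_logCoord hL.ne' rfl _ (risky_pos_of_mem_cell hρp hq)⟩

end CellCoord

section LocalComparison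

variable {r μ σ a b ε ρ : ℝ} {p : ℝ × ℝ × ℝ} {u v G : ℝ × ℝ × ℝ → ℝ}

/-- At zero risky holdings the slice is a curve and its boundary a single point. -/
theorem hasSliceBarrier_of_risky_eq_zero (hp : p.2.2 = 0) (hρ : 0 < ρ) (hε : 0 < ε) :
    HasSliceBarrier r μ σ (cellInterior r μ p ρ) (cell r μ p ρ)
      (fun q => ((discount r μ q).2.1 - (discount r μ p).2.1) ^ 2 +
        q.2.2 ^ 2 * Real.exp (-((2 * μ + σ ^ 2) * q.1))) p.1 ε v p := by
  set e := (discount r μ).symm (p.1 + ρ, (discount r μ p).2.1, 0)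
  refine ⟨fun _ => v e, fun q => ε * (q.1 - (p.1 + ρ)), 0, fun q _ => .const _, fun q _ => ?_,
    fun q hq => ?_, by nlinarith⟩
  · have hd : HasDerivAt (fun t => ε * (t - (p.1 + ρ))) (ε * 1) q.1 :=
      ((hasDerivAt_id q.1).sub_const _).const_mul ε
    exact ⟨-(ε * 1), by linarith, .time (by fun_prop) hd⟩
  · obtain ⟨hcash, hrisky⟩ := (add_eq_zero_iff_of_nonneg (by positivity) (by positivity)).1 hq.2.2.1
    replace hcash : (discount r μ q).2.1 = (discount r μ p).2.1 := by
      rwa [sq_eq_zero_iff, sub_eq_zero] at hcash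
    replace hrisky : q.2.2 = 0 := by simpa [(Real.exp_pos _).ne'] using hrisky
    have hdisc {q : ℝ × ℝ × ℝ} (hq : q.2.2 = 0) : (discount r μ q).2.2 = 0 := by
      change q.2.2 * _ = 0
      rw [hq, zero_mul]
    have htime : q.1 = p.1 + ρ := (of_mem_sliceBoundary_cell hq hcash).resolve_right (by
      rw [hdisc hp, hdisc hrisky, sub_self, abs_zero]
      exact hρ.ne)
    have hqe : q = e := (Homeomorph.eq_symm_apply _).2
      (Prod.ext htime (Prod.ext hcash (hdisc hrisky)))
    simp [← hqe, htime]

/-- The barrier is `-δ (t₁ - t) ζ (1 - ζ)`, with `t₁` the final time of the cell and `ζ ∈ [0, 1]`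
the coordinate. -/
theorem exists_strict_barrier (hp : p.2 ∈ Sbar) (hσ : σ ≠ 0) (hρ : 0 < ρ)
    (hρp : ρ < (discount r (μ - σ ^ 2 / 2) p).2.2) (hε : 0 < ε) :
    ∃ ω : ℝ × ℝ × ℝ → ℝ,
      (∀ q ∈ cell r (μ - σ ^ 2 / 2) p ρ, ∃ g ≥ -ε, HasGenAt r μ σ ω q g) ∧
      (∀ q, q.1 = p.1 + ρ ∨ cellCoord r (μ - σ ^ 2 / 2) p ρ q = 0 ∨
        cellCoord r (μ - σ ^ 2 / 2) p ρ q = 1 → ω q = 0) ∧ ω p < 0 := by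
  obtain ⟨κ, hκ₀, hκ⟩ := exists_pos_hasGenAt_cellCoord hσ hρ hρp
  obtain ⟨δ, hδ, hδε⟩ : ∃ δ, 0 < δ ∧ δ * (1 + 2 * κ * ρ) = ε :=
    ⟨ε / (1 + 2 * κ * ρ), by positivity, div_mul_cancel₀ _ (by positivity)⟩
  have hω := (isHeatSol_eval_mul_eval (κ := κ) (Polynomial.C δ *
    (Polynomial.X - Polynomial.C (p.1 + ρ))) (Polynomial.X * (1 - Polynomial.X))).congr_source
    (e' := fun s => δ * (s.2 * (1 - s.2) + 2 * κ * (p.1 + ρ - s.1))) fun s => by simp; ring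
  refine ⟨_, fun q hq => ⟨_, ?_, hκ hω hq⟩, ?_, ?_⟩
  · obtain ⟨hζ, hζ'⟩ := cellCoord_mem_Icc hρ hρp hq
    set ζ := cellCoord r (μ - σ ^ 2 / 2) p ρ q
    have htime : p.1 + ρ - q.1 ≤ ρ := by linarith [hq.2.1]
    have hsource : δ * (ζ * (1 - ζ) + 2 * κ * (p.1 + ρ - q.1)) ≤ δ * (1 + 2 * κ * ρ) := by
      gcongr
      nlinarith
    linarith
  · rintro q (h | h | h) <;> simp [h]
  · obtain ⟨hζ, hζ'⟩ := cellCoord_self_mem_Ioo hρ hρp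
      (risky_pos_of_mem_cell hρp (self_mem_cell hp hρ.le))
    have := mul_pos (mul_pos hδ hρ) (mul_pos hζ (sub_pos.2 hζ'))
    simpa using this

theorem exists_hasGenAt_zero_le_and_le (hp : p.2 ∈ Sbar) (hσ : σ ≠ 0) (hρ : 0 < ρ)
    (hρp : ρ < (discount r (μ - σ ^ 2 / 2) p).2.2)
    (hv : ContinuousOn v (cell r (μ - σ ^ 2 / 2) p ρ)) {η : ℝ} (hη : 0 < η) :
    ∃ h : ℝ × ℝ × ℝ → ℝ, (∀ q ∈ cell r (μ - σ ^ 2 / 2) p ρ, HasGenAt r μ σ h q 0) ∧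
      ∀ q ∈ cell r (μ - σ ^ 2 / 2) p ρ,
        (discount r (μ - σ ^ 2 / 2) q).2.1 = (discount r (μ - σ ^ 2 / 2) p).2.1 →
        (q.1 = p.1 + ρ ∨ cellCoord r (μ - σ ^ 2 / 2) p ρ q = 0 ∨
          cellCoord r (μ - σ ^ 2 / 2) p ρ q = 1) → h q ≤ v q ∧ v q ≤ h q + η := by
  obtain ⟨κ, hκ₀, hκ⟩ := exists_pos_hasGenAt_cellCoord hσ hρ hρp
  obtain ⟨H, hH, hHv⟩ := exists_isHeatSol_le_and_le hκ₀.ne' (by linarith : p.1 ≤ p.1 + ρ)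
    (hv.comp continuous_sliceParam.continuousOn (mapsTo_sliceParam hp hρ hρp)) hη
  refine ⟨_, fun q hq => by simpa using hκ hH hq, fun q hq hcash hbd => ?_⟩
  have htime : q.1 ≤ p.1 + ρ := by linarith [(abs_le.1 (dist_le_of_mem_cell hq).1).2]
  have h := hHv (q.1, cellCoord r (μ - σ ^ 2 / 2) p ρ q)
    ⟨⟨hq.2.1, htime⟩, cellCoord_mem_Icc hρ hρp hq⟩ hbd
  rwa [Function.comp_apply, sliceParam_cellCoord hρ hρp hq hcash] at h

theorem hasSliceBarrier_of_risky_pos (hp : p.2 ∈ Sbar) (hσ : σ ≠ 0) (hρ : 0 < ρ)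
    (hρp : ρ < (discount r (μ - σ ^ 2 / 2) p).2.2)
    (hv : ContinuousOn v (cell r (μ - σ ^ 2 / 2) p ρ)) (hε : 0 < ε) :
    HasSliceBarrier r μ σ (cellInterior r (μ - σ ^ 2 / 2) p ρ) (cell r (μ - σ ^ 2 / 2) p ρ)
      (fun q => ((discount r (μ - σ ^ 2 / 2) q).2.1 - (discount r (μ - σ ^ 2 / 2) p).2.1) ^ 2)
      p.1 ε v p := by
  obtain ⟨ω, hω, hω₀, hωp⟩ := exists_strict_barrier hp hσ hρ hρp hε
  obtain ⟨h, hh, hhv⟩ := exists_hasGenAt_zero_le_and_le hp hσ hρ hρp hv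
    (half_pos (neg_pos.2 hωp))
  refine ⟨h, ω, -ω p / 2, hh, hω, fun q hq => ?_, by linarith⟩
  have hcash : (discount r (μ - σ ^ 2 / 2) q).2.1 = (discount r (μ - σ ^ 2 / 2) p).2.1 :=
    sub_eq_zero.1 (sq_eq_zero_iff.1 hq.2.2.1)
  have hbd := (of_mem_sliceBoundary_cell hq hcash).imp_right
    (cellCoord_eq_zero_or_one hρ hρp hq.1)
  exact ⟨hhv q hq.1 hcash hbd, (hω₀ q hbd).ge⟩

/-- Cells are taken in coordinates discounted at the drift of the log-price `μ - σ² / 2`, except at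
zero risky holdings, where there is no log-price and the penalty also forces `x₁ = 0`. -/
theorem not_isMaxOn_sub_sub_of_isViscSuperOn {N : Set (ℝ × ℝ × ℝ)} (hσ : σ ≠ 0) (hε : 0 < ε)
    (hp : p ∈ domI a b) (hN : N ∈ 𝓝 p) (hvc : ContinuousOn v (domI a b))
    (huc : ContinuousOn u (domI a b)) (hv : IsViscSuperOn r μ σ (domI a b) (domI a b ∩ N) v)
    (hu : IsViscSuperOn r μ σ (domI a b) (domI a b ∩ N) fun q => -u q)
    (hG : ∀ q ∈ domI a b, ∃ g ≥ ε, HasGenAt r μ σ G q g) :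
    ¬ IsMaxOn (fun q => u q - G q - v q) (domI a b) p := by
  intro hmax
  have hpS : p.2 ∈ Sbar := hp.2.2.1
  suffices ∃ m ρ π, 0 < ρ ∧ cell r m p ρ ⊆ domI a b ∩ N ∧ (∀ q, 0 ≤ π q) ∧
      (∀ q, HasGenAt r μ σ π q 0) ∧ (∀ q, (discount r m q).2 = (discount r m p).2 → π q = 0) ∧
      HasSliceBarrier r μ σ (cellInterior r m p ρ) (cell r m p ρ) π p.1 ε v p by
    obtain ⟨m, ρ, π, hρ, hcell, hπ₀, hπ, hπp, hbarrier⟩ := this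
    have hD : cell r m p ρ ⊆ domI a b := hcell.trans inter_subset_left
    have hK := isPenalizedCell_cell hD hπ₀ hπ
    have hO : cellInterior r m p ρ ∩ domI a b ⊆ domI a b ∩ N := hK.inter_subset.trans hcell
    exact hK.not_isMaxOn_sub_sub (self_mem_cell hpS hρ.le) (mem_closure_cell_slice hpS hρ hπp)
      (hv.mono hO) (hu.mono hO) (hvc.mono hD) (huc.mono hD) (fun q hq => hG q (hD hq)) hbarrier
      (hmax.on_subset hD)
  rcases (show 0 ≤ p.2.2 from hpS.2).eq_or_lt' with hp₁ | hp₁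
  · obtain ⟨ρ, hcell, hρ⟩ := ((eventually_cell_subset hp hN).and self_mem_nhdsWithin).exists
    refine ⟨μ, ρ, _, hρ, hcell, fun q => by positivity, fun q => ?_, fun q hq => ?_,
      hasSliceBarrier_of_risky_eq_zero hp₁ hρ hε⟩
    · simpa using (hasGenAt_sq_discount_cash_sub _ q).add (hasGenAt_sq_mul_exp q)
    · have hq₁ : q.2.2 * Real.exp (-(μ * q.1)) = p.2.2 * _ := congrArg Prod.snd hq
      simp_all
  · obtain ⟨ρ, hcell, hρ, hρp⟩ := ((eventually_cell_subset hp hN).and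
      (Ioo_mem_nhdsGT (mul_pos hp₁ (Real.exp_pos (-((μ - σ ^ 2 / 2) * p.1)))))).exists
    exact ⟨μ - σ ^ 2 / 2, ρ, _, hρ, hcell, fun q => sq_nonneg _,
      fun q => hasGenAt_sq_discount_cash_sub _ q, fun q hq => by simp [hq],
      hasSliceBarrier_of_risky_pos hpS hσ hρ hρp
        (hvc.mono (hcell.trans inter_subset_left)) hε⟩

end LocalComparison

/-! ### The intervention operator -/

theorem isClosed_Sbar : IsClosed Sbar := isClosed_Ici.prod isClosed_Ici

theorem domI_subset_Icc_prod {a b : ℝ} : domI a b ⊆ Icc a b ×ˢ Sbar :=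
  fun _ hq => ⟨⟨hq.1, hq.2.1.le⟩, hq.2.2.1⟩

/-- The transactions leading into the open quadrant. They stay feasible from nearby positions, so
the intervention operator is upper semicontinuous along them. -/
def openDset (C : ℝ → ℝ) (x : ℝ × ℝ) : Set ℝ := {d | 0 < x.1 - d - C d ∧ 0 < x.2 + d}

section Intervention

variable {C : ℝ → ℝ} {a b c d : ℝ} {x : ℝ × ℝ} {p : ℝ × ℝ × ℝ} {u v : ℝ → ℝ × ℝ → ℝ}

theorem continuous_Gam (hC : Continuous C) : Continuous fun q : (ℝ × ℝ) × ℝ => Gam C q.1 q.2 := by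
  unfold Gam
  fun_prop

theorem Dset_subset_Icc (hpos : ∀ d, 0 < C d) : Dset C x ⊆ Icc (-x.2) x.1 := by
  rintro d ⟨h₁ : 0 ≤ x.1 - d - C d, h₂ : 0 ≤ x.2 + d⟩
  exact ⟨by linarith, by linarith [hpos d]⟩

theorem isCompact_Dset (hC : Continuous C) (hpos : ∀ d, 0 < C d) : IsCompact (Dset C x) :=
  isCompact_Icc.of_isClosed_subset (isClosed_Sbar.preimage
    ((continuous_Gam hC).comp (by fun_prop : Continuous fun d : ℝ => (x, d))))
    (Dset_subset_Icc hpos)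

theorem eventually_le_MopF (hC : Continuous C) (hpos : ∀ d, 0 < C d)
    (hv : ContinuousOn (fun q : ℝ × ℝ × ℝ => v q.1 q.2) (Icc a b ×ˢ Sbar))
    (h : ∀ d ∈ Dset C p.2, c < v p.1 (Gam C p.2 d)) :
    ∀ᶠ q in 𝓝[Icc a b ×ˢ Sbar] p, (c : EReal) ≤ MopF C v q := by
  let after : (ℝ × ℝ × ℝ) × ℝ → ℝ × ℝ × ℝ := fun z => (z.1.1, Gam C z.1.2 z.2)
  have hafter : Continuous after := (continuous_fst.comp continuous_fst).prodMk
    ((continuous_Gam hC).comp (by fun_prop : Continuous fun z : (ℝ × ℝ × ℝ) × ℝ => (z.1.2, z.2)))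
  have hclosed : IsClosed {w ∈ Icc a b ×ˢ Sbar | v w.1 w.2 ≤ c} :=
    hv.preimage_isClosed_of_isClosed (isClosed_Icc.prod isClosed_Sbar) isClosed_Iic
  have hnear : ∀ᶠ q in 𝓝 p, ∀ d ∈ Icc (-p.2.2 - 1) (p.2.1 + 1),
      after (q, d) ∈ {w ∈ Icc a b ×ˢ Sbar | v w.1 w.2 ≤ c}ᶜ :=
    isCompact_Icc.eventually_forall_of_forall_eventually fun d _ =>
      hafter.continuousAt.eventually (hclosed.isOpen_compl.mem_nhds fun hd =>
        (h d hd.1.2).not_ge hd.2)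
  have hcash : ∀ᶠ q : ℝ × ℝ × ℝ in 𝓝 p, q.2.1 < p.2.1 + 1 :=
    (by fun_prop : Continuous fun q : ℝ × ℝ × ℝ => q.2.1).continuousAt.eventually
      (gt_mem_nhds (lt_add_one _))
  have hrisky : ∀ᶠ q : ℝ × ℝ × ℝ in 𝓝 p, q.2.2 < p.2.2 + 1 :=
    (by fun_prop : Continuous fun q : ℝ × ℝ × ℝ => q.2.2).continuousAt.eventually
      (gt_mem_nhds (lt_add_one _))
  rw [eventually_nhdsWithin_iff]
  filter_upwards [hnear, hcash, hrisky] with q hq hq₁ hq₂ hqE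
  refine le_iInf₂ fun d hd => EReal.coe_le_coe_iff.2 (not_lt.1 fun hlt => ?_)
  have hdI := Dset_subset_Icc hpos hd
  exact hq d ⟨by linarith [hdI.1], by linarith [hdI.2]⟩ ⟨⟨hqE.1, hd⟩, hlt.le⟩

theorem eventually_lt_lscEnv_MopF (hC : Continuous C) (hpos : ∀ d, 0 < C d)
    (hv : ContinuousOn (fun q : ℝ × ℝ × ℝ => v q.1 q.2) (Icc a b ×ˢ Sbar))
    (hp : p ∈ Icc a b ×ˢ Sbar) (h : ∀ d ∈ Dset C p.2, v p.1 p.2 < v p.1 (Gam C p.2 d)) :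
    ∀ᶠ q in 𝓝 p, q ∈ Icc a b ×ˢ Sbar →
      (v q.1 q.2 : EReal) < lscEnv (MopF C v) (Icc a b ×ˢ Sbar) q := by
  have hvD : ContinuousOn (fun d => v p.1 (Gam C p.2 d)) (Dset C p.2) :=
    hv.comp (f := fun d => (p.1, Gam C p.2 d)) (continuous_const.prodMk ((continuous_Gam hC).comp
      (by fun_prop : Continuous fun d : ℝ => (p.2, d)))).continuousOn fun d hd => ⟨hp.1, hd⟩
  obtain ⟨c, hc, hcv⟩ := (isCompact_Dset hC hpos).exists_forall_le' hvD h
  obtain ⟨c', hc', hc'c⟩ := exists_between hc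
  have hM := eventually_le_MopF hC hpos hv fun d hd => hc'c.trans_le (hcv d hd)
  filter_upwards [(eventually_nhdsWithin_iff.1 hM).eventually_nhds,
    eventually_nhdsWithin_iff.1 ((hv p hp).eventually (gt_mem_nhds hc'))] with q hq hq' hqE
  exact (EReal.coe_lt_coe_iff.2 (hq' hqE)).trans_le
    (le_liminf_of_le (by isBoundedDefault) (eventually_nhdsWithin_iff.2 hq))

theorem uscEnv_MopF_le_of_mem_openDset (hC : Continuous C)
    (hu : ContinuousOn (fun q : ℝ × ℝ × ℝ => u q.1 q.2) (Icc a b ×ˢ Sbar))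
    (hp : p ∈ Icc a b ×ˢ Sbar) (hd : d ∈ openDset C p.2) :
    uscEnv (MopF C u) (Icc a b ×ˢ Sbar) p ≤ (u p.1 (Gam C p.2 d) : EReal) := by
  let after : ℝ × ℝ × ℝ → ℝ × ℝ × ℝ := fun q => (q.1, Gam C q.2 d)
  have hafter : Continuous after := continuous_fst.prodMk
    ((continuous_Gam hC).comp (by fun_prop : Continuous fun q : ℝ × ℝ × ℝ => (q.2, d)))
  have hopen : ∀ᶠ q in 𝓝 p, d ∈ openDset C q.2 :=
    ((isOpen_lt continuous_const (by fun_prop : Continuous fun q : ℝ × ℝ × ℝ =>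
      q.2.1 - d - C d)).inter (isOpen_lt continuous_const
        (by fun_prop : Continuous fun q : ℝ × ℝ × ℝ => q.2.2 + d))).mem_nhds hd
  have hD : ∀ᶠ q in 𝓝[Icc a b ×ˢ Sbar] p, q.1 ∈ Icc a b ∧ d ∈ Dset C q.2 := by
    filter_upwards [nhdsWithin_le_nhds hopen, self_mem_nhdsWithin] with q hq hqE
    exact ⟨hqE.1, hq.1.le, hq.2.le⟩
  have hlim : Tendsto (fun q => (u q.1 (Gam C q.2 d) : EReal)) (𝓝[Icc a b ×ˢ Sbar] p)
      (𝓝 (u p.1 (Gam C p.2 d))) :=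
    (continuous_coe_real_ereal.tendsto _).comp
      (Tendsto.comp (hu (after p) ⟨hp.1, hd.1.le, hd.2.le⟩)
        (tendsto_nhdsWithin_iff.2 ⟨hafter.continuousWithinAt, hD⟩))
  have : (𝓝[Icc a b ×ˢ Sbar] p).NeBot := mem_closure_iff_nhdsWithin_neBot.1 (subset_closure hp)
  exact (limsup_le_limsup (hD.mono fun q hq => iInf₂_le d hq.2)).trans_eq hlim.limsup_eq

theorem Dset_subset_closure_openDset (hmono : StrictMono fun d => d + C d)
    (hne : (openDset C x).Nonempty) : Dset C x ⊆ closure (openDset C x) := by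
  obtain ⟨e, he₁, he₂⟩ := hne
  rintro d ⟨hd₁ : 0 ≤ x.1 - d - C d, hd₂ : 0 ≤ x.2 + d⟩
  have hbefore {d' e : ℝ} (h : d' < e) (he : 0 ≤ x.1 - e - C e) : 0 < x.1 - d' - C d' := by
    have : d' + C d' < e + C e := hmono h
    linarith
  rcases lt_trichotomy d e with h | rfl | h
  · have hsub : Ioo d e ⊆ openDset C x := fun d' hd' =>
      ⟨hbefore hd'.2 he₁.le, by linarith [hd'.1]⟩
    exact closure_mono hsub ((closure_Ioo h.ne).symm ▸ left_mem_Icc.2 h.le)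
  · exact subset_closure ⟨he₁, he₂⟩
  · have hsub : Ioo e d ⊆ openDset C x := fun d' hd' =>
      ⟨hbefore hd'.2 hd₁, by linarith [hd'.1]⟩
    exact closure_mono hsub ((closure_Ioo h.ne).symm ▸ right_mem_Icc.2 h.le)

theorem openDset_nonempty (hC : Continuous C) (h : 0 < x.1 - -x.2 - C (-x.2)) :
    (openDset C x).Nonempty := by
  have hcash : ∀ᶠ d in 𝓝[>] (-x.2), 0 < x.1 - d - C d := nhdsWithin_le_nhds
    ((by fun_prop : Continuous fun d => x.1 - d - C d).continuousAt.eventually (lt_mem_nhds h))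
  obtain ⟨d, hd, hd' : -x.2 < d⟩ := (hcash.and self_mem_nhdsWithin).exists
  exact ⟨d, hd, by linarith⟩

theorem uscEnv_MopF_le (hC : Continuous C) (hmono : StrictMono fun d => d + C d)
    (hu : ContinuousOn (fun q : ℝ × ℝ × ℝ => u q.1 q.2) (Icc a b ×ˢ Sbar))
    (hp : p ∈ Icc a b ×ˢ Sbar) (hne : (openDset C p.2).Nonempty) (hd : d ∈ Dset C p.2) :
    uscEnv (MopF C u) (Icc a b ×ˢ Sbar) p ≤ (u p.1 (Gam C p.2 d) : EReal) := by
  have hafter : Continuous fun d => (p.1, Gam C p.2 d) := continuous_const.prodMk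
    ((continuous_Gam hC).comp (by fun_prop : Continuous fun d : ℝ => (p.2, d)))
  refine ContinuousWithinAt.closure_le (f := fun _ => uscEnv (MopF C u) (Icc a b ×ˢ Sbar) p)
    (g := fun d => (u p.1 (Gam C p.2 d) : EReal)) (Dset_subset_closure_openDset hmono hne hd)
    continuousWithinAt_const ?_ fun d hd => uscEnv_MopF_le_of_mem_openDset hC hu hp hd
  exact continuous_coe_real_ereal.continuousAt.comp_continuousWithinAt
    (ContinuousWithinAt.comp (g := fun q : ℝ × ℝ × ℝ => u q.1 q.2)
      (f := fun d => (p.1, Gam C p.2 d)) (hu _ ⟨hp.1, hd⟩) hafter.continuousWithinAt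
      fun d hd => ⟨hp.1, hd.1.le, hd.2.le⟩)

end Intervention

/-! ### Comparison on one stage -/

/-- Subsolutions of the quasi-variational inequality on one stage `[a, b] × 𝒮̄`, bounded above by
`W` and with terminal data `F` at the deadline `b`. Only test functions that are `C²` on the whole
space are used. -/
structure IsStageSub (C : ℝ → ℝ) (r μ σ a b W : ℝ) (F : ℝ × ℝ → ℝ) (u : ℝ → ℝ × ℝ → ℝ) :
    Prop where
  continuousOn : ContinuousOn (fun q : ℝ × ℝ × ℝ => u q.1 q.2) (Icc a b ×ˢ Sbar)
  le_bound : ∀ q ∈ Icc a b ×ˢ Sbar, u q.1 q.2 ≤ W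
  interior : ∀ p ∈ domI a b, ∀ φ : ℝ × ℝ × ℝ → ℝ, ContDiff ℝ 2 φ →
    IsMaxOn (fun q => u q.1 q.2 - φ q) (domI a b) p →
    gen r μ σ (fun t x y => φ (t, x, y)) p.1 p.2.1 p.2.2 ≤ 0 ∧
      (u p.1 p.2 : EReal) ≤ uscEnv (MopF C u) (Icc a b ×ˢ Sbar) p
  terminal : ∀ x ∈ Sset,
    (u b x : EReal) ≤ min (F x : EReal) (uscEnv (MopF C u) (Icc a b ×ˢ Sbar) (b, x))

/-- Supersolutions of the quasi-variational inequality on one stage `[a, b] × 𝒮̄`, bounded below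
and with terminal data `F` at the deadline `b`. At the origin, where no equation is imposed, they
are at least `W`. -/
structure IsStageSuper (C : ℝ → ℝ) (r μ σ a b W : ℝ) (F : ℝ × ℝ → ℝ) (v : ℝ → ℝ × ℝ → ℝ) :
    Prop where
  continuousOn : ContinuousOn (fun q : ℝ × ℝ × ℝ => v q.1 q.2) (Icc a b ×ˢ Sbar)
  exists_le : ∃ m, ∀ q ∈ Icc a b ×ˢ Sbar, m ≤ v q.1 q.2
  le_origin : ∀ t ∈ Icc a b, W ≤ v t (0, 0)
  interior : ∀ p ∈ domI a b, ∀ φ : ℝ × ℝ × ℝ → ℝ, ContDiff ℝ 2 φ →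
    IsMinOn (fun q => v q.1 q.2 - φ q) (domI a b) p →
    0 ≤ gen r μ σ (fun t x y => φ (t, x, y)) p.1 p.2.1 p.2.2 ∨
      lscEnv (MopF C v) (Icc a b ×ˢ Sbar) p ≤ (v p.1 p.2 : EReal)
  terminal : ∀ x ∈ Sset,
    min (F x : EReal) (lscEnv (MopF C v) (Icc a b ×ˢ Sbar) (b, x)) ≤ (v b x : EReal)

/-- The barrier `e^{β(b - t)} (1 + x₀ + x₁)`, a coercive function that every transaction strictly
decreases. -/
noncomputable def wealthBarrier (β b : ℝ) (q : ℝ × ℝ × ℝ) : ℝ :=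
  Real.exp (β * (b - q.1)) * (1 + q.2.1 + q.2.2)

section Stage

variable {C : ℝ → ℝ} {r μ σ a b W β d ε M : ℝ} {F F' : ℝ × ℝ → ℝ} {u v : ℝ → ℝ × ℝ → ℝ}
  {p q : ℝ × ℝ × ℝ}

theorem continuous_wealthBarrier : Continuous (wealthBarrier β b) := by
  unfold wealthBarrier
  fun_prop

theorem one_add_le_wealthBarrier (hβ : 0 ≤ β) (hq : q ∈ Icc a b ×ˢ Sbar) :
    1 + q.2.1 + q.2.2 ≤ wealthBarrier β b q :=
  have hwealth : 0 ≤ 1 + q.2.1 + q.2.2 :=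
    add_nonneg (add_nonneg zero_le_one hq.2.1) hq.2.2
  le_mul_of_one_le_left hwealth (Real.one_le_exp (mul_nonneg hβ (sub_nonneg.2 hq.1.2)))

theorem wealthBarrier_pos (hq : q.2 ∈ Sbar) : 0 < wealthBarrier β b q :=
  mul_pos (Real.exp_pos _)
    (add_pos_of_pos_of_nonneg (add_pos_of_pos_of_nonneg one_pos hq.1) hq.2)

theorem wealthBarrier_Gam_lt (hd : 0 < C d) :
    wealthBarrier β b (q.1, Gam C q.2 d) < wealthBarrier β b q :=
  mul_lt_mul_of_pos_left (by change 1 + (q.2.1 - d - C d) + (q.2.2 + d) < _; linarith)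
    (Real.exp_pos _)

theorem hasGenAt_wealthBarrier (q : ℝ × ℝ × ℝ) :
    HasGenAt r μ σ (wealthBarrier β b) q
      (Real.exp (β * (b - q.1)) * (β * (1 + q.2.1 + q.2.2) - r * q.2.1 - μ * q.2.2)) := by
  unfold wealthBarrier
  refine ⟨by fun_prop, Real.exp (β * (b - q.1)) * (β * -1) * (1 + q.2.1 + q.2.2),
    Real.exp (β * (b - q.1)) * 1, fun _ => Real.exp (β * (b - q.1)) * 1, 0, ?_, ?_, ?_,
    hasDerivAt_const _ _, by ring⟩
  · exact (((hasDerivAt_id' q.1).const_sub b).const_mul β).exp.mul_const (1 + q.2.1 + q.2.2)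
  · exact (((hasDerivAt_id' q.2.1).const_add 1).add_const q.2.2).const_mul
      (Real.exp (β * (b - q.1)))
  · exact .of_forall fun y =>
      ((hasDerivAt_id' y).const_add (1 + q.2.1)).const_mul (Real.exp (β * (b - q.1)))

theorem exists_one_le_hasGenAt_wealthBarrier (hq : q ∈ Icc a b ×ˢ Sbar) :
    ∃ g ≥ 1, HasGenAt r μ σ (wealthBarrier (|r| + |μ| + 1) b) q g := by
  refine ⟨_, one_le_mul_of_one_le_of_one_le (Real.one_le_exp (mul_nonneg (by positivity)
    (sub_nonneg.2 hq.1.2))) ?_, hasGenAt_wealthBarrier q⟩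
  have hx₀ : 0 ≤ q.2.1 := hq.2.1
  have hx₁ : 0 ≤ q.2.2 := hq.2.2
  have hr : r * q.2.1 ≤ |r| * q.2.1 := mul_le_mul_of_nonneg_right (le_abs_self r) hx₀
  have hμ : μ * q.2.2 ≤ |μ| * q.2.2 := mul_le_mul_of_nonneg_right (le_abs_self μ) hx₁
  have hcross : 0 ≤ |r| * (1 + q.2.2) + |μ| * (1 + q.2.1) := by positivity
  linarith

theorem exists_isMaxOn_sub_wealthBarrier {f : ℝ × ℝ × ℝ → ℝ} (hβ : 0 ≤ β) (hε : 0 < ε)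
    (hf : ContinuousOn f (Icc a b ×ˢ Sbar)) (hM : ∀ q ∈ Icc a b ×ˢ Sbar, f q ≤ M)
    (hp : p ∈ Icc a b ×ˢ Sbar) :
    ∃ q ∈ Icc a b ×ˢ Sbar,
      IsMaxOn (fun q => f q - ε * wealthBarrier β b q) (Icc a b ×ˢ Sbar) q := by
  have hclosed : IsClosed (Icc a b ×ˢ Sbar) := isClosed_Icc.prod isClosed_Sbar
  set R := (M - (f p - ε * wealthBarrier β b p)) / ε with hR
  have hcont : ContinuousOn (fun q => f q - ε * wealthBarrier β b q) (Icc a b ×ˢ Sbar) :=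
    hf.sub (continuous_wealthBarrier.const_mul ε).continuousOn
  refine hcont.exists_isMaxOn' hclosed hp ?_
  rw [eventually_inf_principal]
  have hbox : IsCompact (Icc a b ×ˢ Icc 0 R ×ˢ Icc 0 R) :=
    isCompact_Icc.prod (isCompact_Icc.prod isCompact_Icc)
  filter_upwards [hbox.compl_mem_cocompact] with q hqbox hq
  have hx₀ : 0 ≤ q.2.1 := hq.2.1
  have hx₁ : 0 ≤ q.2.2 := hq.2.2
  have hwealth : R ≤ 1 + q.2.1 + q.2.2 := by
    by_contra! hlt
    exact hqbox ⟨hq.1, ⟨hx₀, by linarith⟩, hx₁, by linarith⟩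
  rw [hR, div_le_iff₀' hε] at hwealth
  linarith [hM q hq, mul_le_mul_of_nonneg_left (one_add_le_wealthBarrier hβ hq) hε.le]

namespace IsStageSub

theorem isViscSuperOn_neg (hu : IsStageSub C r μ σ a b W F u) :
    IsViscSuperOn r μ σ (domI a b) (domI a b) fun q => -u q.1 q.2 := by
  intro p hp φ g hφ hmin
  obtain ⟨ψ, hψ, hψφ, hψmin⟩ := exists_contDiff_isMinOn_sub (n := 2) (m := -W)
    (fun q hq => neg_le_neg (hu.le_bound q (domI_subset_Icc_prod hq))) hφ.1 hmin
  have hmax : IsMaxOn (fun q => u q.1 q.2 - -ψ q) (domI a b) p := fun q hq => by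
    have : -u p.1 p.2 - ψ p ≤ -u q.1 q.2 - ψ q := hψmin hq
    change u q.1 q.2 - -ψ q ≤ u p.1 p.2 - -ψ p
    linarith
  have hgen := (hu.interior p hp _ hψ.neg hmax).1
  rw [(hφ.congr_of_eventuallyEq hψφ).neg.gen_eq] at hgen
  exact neg_nonpos.1 hgen

/-- The definition gives the obstacle inequality only at points that can be touched from above by a
test function. Such points are dense, and the inequality fails on an open set if it fails at all. -/
theorem le_uscEnv_MopF (hu : IsStageSub C r μ σ a b W F u) (hp : p ∈ domI a b) :
    (u p.1 p.2 : EReal) ≤ uscEnv (MopF C u) (Icc a b ×ˢ Sbar) p := by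
  by_contra! hlt
  obtain ⟨c, hMc, hcu⟩ := EReal.lt_iff_exists_real_btwn.1 hlt
  have hM : ∀ᶠ q in 𝓝 p, ∀ᶠ z in 𝓝[Icc a b ×ˢ Sbar] q, MopF C u z < c := by
    simpa only [eventually_nhdsWithin_iff] using
      (eventually_nhdsWithin_iff.1 (eventually_lt_of_limsup_lt hMc)).eventually_nhds
  have hu_gt : ∀ᶠ q in 𝓝 p, q ∈ Icc a b ×ˢ Sbar → c < u q.1 q.2 :=
    eventually_nhdsWithin_iff.1 ((hu.continuousOn p (domI_subset_Icc_prod hp)).eventually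
      (lt_mem_nhds (EReal.coe_lt_coe_iff.1 hcu)))
  have htime : ∀ᶠ q in 𝓝 p, q.1 < b := continuous_fst.continuousAt.eventually (gt_mem_nhds hp.2.1)
  have horigin : ∀ᶠ q in 𝓝 p, q.2 ≠ (0, 0) :=
    continuous_snd.continuousAt.eventually_ne hp.2.2.2
  obtain ⟨φ, hφ, q, ⟨hqE, hqV⟩, hqmax⟩ := exists_isMaxOn_sub_contDiff_mem
    (isClosed_Icc.prod isClosed_Sbar) hu.continuousOn hu.le_bound (domI_subset_Icc_prod hp)
    (hM.and (hu_gt.and (htime.and horigin)))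
  obtain ⟨hMq, huq, hqb, hq0⟩ := hqV
  have hle := (hu.interior q ⟨hqE.1.1, hqb, hqE.2, hq0⟩ φ hφ
    (hqmax.on_subset domI_subset_Icc_prod)).2
  have hle_c : uscEnv (MopF C u) (Icc a b ×ˢ Sbar) q ≤ c :=
    limsup_le_of_le (by isBoundedDefault) (hMq.mono fun _ => le_of_lt)
  exact (huq hqE).not_ge (EReal.coe_le_coe_iff.1 (hle.trans hle_c))

end IsStageSub

theorem IsStageSuper.isViscSuperOn (hv : IsStageSuper C r μ σ a b W F v) {N : Set (ℝ × ℝ × ℝ)}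
    (hN : ∀ q ∈ N, q ∈ Icc a b ×ˢ Sbar →
      (v q.1 q.2 : EReal) < lscEnv (MopF C v) (Icc a b ×ˢ Sbar) q) :
    IsViscSuperOn r μ σ (domI a b) (domI a b ∩ N) fun q => v q.1 q.2 := by
  rintro p ⟨hp, hpN⟩ φ g hφ hmin
  obtain ⟨m, hm⟩ := hv.exists_le
  obtain ⟨ψ, hψ, hψφ, hψmin⟩ := exists_contDiff_isMinOn_sub (n := 2)
    (fun q hq => hm q (domI_subset_Icc_prod hq)) hφ.1 hmin
  have hinterior := hv.interior p hp ψ hψ hψmin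
  rw [(hφ.congr_of_eventuallyEq hψφ).gen_eq] at hinterior
  exact hinterior.resolve_right (hN p hpN (domI_subset_Icc_prod hp)).not_ge

/-- If feasible transactions can leave the position in the interior, a transaction that does not
increase `v` increases `u - v` minus the barrier. Otherwise the only feasible transaction leads to
the origin, where `v` is at least the bound `W` on `u`. -/
theorem IsStageSub.lt_Gam_of_isMaxOn (hC : Continuous C) (hpos : ∀ d, 0 < C d)
    (hmono : StrictMono fun d => d + C d) (hu : IsStageSub C r μ σ a b W F u)
    (hv : IsStageSuper C r μ σ a b W F' v) (hε : 0 < ε) (hp : p ∈ Icc a b ×ˢ Sbar)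
    (hmax : IsMaxOn (fun q => u q.1 q.2 - v q.1 q.2 - ε * wealthBarrier β b q)
      (Icc a b ×ˢ Sbar) p)
    (hlt : v p.1 p.2 + ε * wealthBarrier β b p < u p.1 p.2)
    (hobs : (u p.1 p.2 : EReal) ≤ uscEnv (MopF C u) (Icc a b ×ˢ Sbar) p) (hd : d ∈ Dset C p.2) :
    v p.1 p.2 < v p.1 (Gam C p.2 d) := by
  have hcash : 0 ≤ p.2.1 - d - C d := hd.1
  have hrisky : -p.2.2 ≤ d := neg_le_iff_add_nonneg'.2 hd.2
  have hsell : -p.2.2 + C (-p.2.2) ≤ d + C d := hmono.monotone hrisky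
  rcases (show 0 ≤ p.2.1 - -p.2.2 - C (-p.2.2) by linarith).lt_or_eq with hopen | hclosed
  · have hu_le : u p.1 p.2 ≤ u p.1 (Gam C p.2 d) := EReal.coe_le_coe_iff.1
      (hobs.trans (uscEnv_MopF_le hC hmono hu.continuousOn hp (openDset_nonempty hC hopen) hd))
    have hle : u p.1 (Gam C p.2 d) - v p.1 (Gam C p.2 d) -
        ε * wealthBarrier β b (p.1, Gam C p.2 d) ≤
          u p.1 p.2 - v p.1 p.2 - ε * wealthBarrier β b p :=
      hmax (show (p.1, Gam C p.2 d) ∈ Icc a b ×ˢ Sbar from ⟨hp.1, hd⟩)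
    linarith [mul_lt_mul_of_pos_left (wealthBarrier_Gam_lt (β := β) (b := b) (q := p) (hpos d)) hε]
  · obtain rfl : d = -p.2.2 :=
      hmono.injective (le_antisymm (show d + C d ≤ -p.2.2 + C (-p.2.2) by linarith) hsell)
    have horigin : Gam C p.2 (-p.2.2) = (0, 0) := Prod.ext hclosed.symm (add_neg_cancel _)
    rw [horigin]
    linarith [hu.le_bound p hp, hv.le_origin p.1 hp.1,
      mul_pos hε (wealthBarrier_pos (β := β) (b := b) hp.2)]

theorem IsStageSub.le_add_of_isMaxOn (hC : Continuous C) (hpos : ∀ d, 0 < C d)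
    (hmono : StrictMono fun d => d + C d) (hσ : σ ≠ 0) (hu : IsStageSub C r μ σ a b W F u)
    (hv : IsStageSuper C r μ σ a b W F' v) (hF : ∀ x ∈ Sset, F x ≤ F' x) (hε : 0 < ε)
    (hp : p ∈ Icc a b ×ˢ Sbar)
    (hmax : IsMaxOn (fun q => u q.1 q.2 - v q.1 q.2 - ε * wealthBarrier (|r| + |μ| + 1) b q)
      (Icc a b ×ˢ Sbar) p) :
    u p.1 p.2 ≤ v p.1 p.2 + ε * wealthBarrier (|r| + |μ| + 1) b p := by
  by_contra! hlt
  have hbarrier := mul_pos hε (wealthBarrier_pos (β := |r| + |μ| + 1) (b := b) hp.2)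
  have hpS : p.2 ∈ Sset := by
    refine ⟨hp.2, fun h : p.2 = (0, 0) => ?_⟩
    linarith [hu.le_bound p hp, h ▸ hv.le_origin p.1 hp.1]
  have hN (hobs : (u p.1 p.2 : EReal) ≤ uscEnv (MopF C u) (Icc a b ×ˢ Sbar) p) :
      ∀ᶠ q in 𝓝 p, q ∈ Icc a b ×ˢ Sbar →
        (v q.1 q.2 : EReal) < lscEnv (MopF C v) (Icc a b ×ˢ Sbar) q :=
    eventually_lt_lscEnv_MopF hC hpos hv.continuousOn hp fun _ =>
      hu.lt_Gam_of_isMaxOn hC hpos hmono hv hε hp hmax hlt hobs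
  rcases hp.1.2.eq_or_lt with hpb | hpb
  · have hterm : (u p.1 p.2 : EReal) ≤
        min (F p.2 : EReal) (uscEnv (MopF C u) (Icc a b ×ˢ Sbar) p) := by
      simpa only [← hpb] using hu.terminal p.2 hpS
    have hterm' : min (F' p.2 : EReal) (lscEnv (MopF C v) (Icc a b ×ˢ Sbar) p) ≤ v p.1 p.2 := by
      simpa only [← hpb] using hv.terminal p.2 hpS
    have hF'v := (min_le_iff.1 hterm').resolve_right
      ((hN (hterm.trans (min_le_right _ _))).self_of_nhds hp).not_ge
    linarith [hF p.2 hpS, EReal.coe_le_coe_iff.1 (hterm.trans (min_le_left _ _)),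
      EReal.coe_le_coe_iff.1 hF'v]
  · have hpD : p ∈ domI a b := ⟨hp.1.1, hpb, hpS⟩
    refine not_isMaxOn_sub_sub_of_isViscSuperOn hσ hε hpD (hN (hu.le_uscEnv_MopF hpD))
      (hv.continuousOn.mono domI_subset_Icc_prod) (hu.continuousOn.mono domI_subset_Icc_prod)
      (hv.isViscSuperOn fun q hq => hq) (hu.isViscSuperOn_neg.mono inter_subset_left)
      (fun q hq => ?_)
      (by simpa only [sub_right_comm] using hmax.on_subset domI_subset_Icc_prod)
    obtain ⟨g, hg, hgen⟩ := exists_one_le_hasGenAt_wealthBarrier (domI_subset_Icc_prod hq)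
    exact ⟨ε * g, le_mul_of_one_le_right hε.le hg, hgen.const_mul ε⟩

theorem IsStageSub.le (hC : Continuous C) (hpos : ∀ d, 0 < C d)
    (hmono : StrictMono fun d => d + C d) (hσ : σ ≠ 0) (hu : IsStageSub C r μ σ a b W F u)
    (hv : IsStageSuper C r μ σ a b W F' v) (hF : ∀ x ∈ Sset, F x ≤ F' x)
    (hp : p ∈ Icc a b ×ˢ Sbar) : u p.1 p.2 ≤ v p.1 p.2 := by
  have hβ : 0 ≤ |r| + |μ| + 1 := by positivity
  obtain ⟨m, hm⟩ := hv.exists_le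
  refine le_of_forall_pos_le_add fun δ hδ => ?_
  have hgp := wealthBarrier_pos (β := |r| + |μ| + 1) (b := b) hp.2
  obtain ⟨q, hq, hqmax⟩ := exists_isMaxOn_sub_wealthBarrier (M := W - m) hβ (div_pos hδ hgp)
    (hu.continuousOn.sub hv.continuousOn) (fun q hq => sub_le_sub (hu.le_bound q hq) (hm q hq)) hp
  have hle := hu.le_add_of_isMaxOn hC hpos hmono hσ hv hF (div_pos hδ hgp) hq hqmax
  have hpq : u p.1 p.2 - v p.1 p.2 - _ ≤ u q.1 q.2 - v q.1 q.2 - _ := hqmax hp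
  rw [div_mul_cancel₀ δ hgp.ne'] at hpq
  linarith

end Stage

/-! ### Arrays of stage solutions -/

/-- The cost of not intervening at the deadline `T k`, as a function of the position: for `k < K`
an optimal withdrawal followed by the continuation value `v (k + 1)`, and for `k = K` the shortfall
after liquidation. -/
noncomputable def deadlineValue (C : ℝ → ℝ) (K : ℕ) (T w G : ℕ → ℝ) (v : ℕ → ℝ → ℝ × ℝ → ℝ)
    (k : ℕ) (x : ℝ × ℝ) : ℝ :=
  if k < K then sInf {y | ∃ θ : ℝ, 0 ≤ θ ∧ θ ≤ x.1 ∧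
    y = w k * max (G k - θ) 0 + v (k + 1) (T k) (x.1 - θ, x.2)}
  else w k * max (G k - x.1 - max (x.2 - C (-x.2)) 0) 0

section Array

variable {C : ℝ → ℝ} {r μ σ W : ℝ} {K k : ℕ} {T w G : ℕ → ℝ} {u v : ℕ → ℝ → ℝ × ℝ → ℝ}
  {x : ℝ × ℝ}

theorem deadlineValue_congr (hx : x ∈ Sbar)
    (h : k < K → ∀ y ∈ Sbar, u (k + 1) (T k) y = v (k + 1) (T k) y) :
    deadlineValue C K T w G u k x = deadlineValue C K T w G v k x := by
  unfold deadlineValue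
  split_ifs with hk
  · refine congrArg sInf (Set.ext fun y => exists_congr fun θ => and_congr_right fun _ =>
      and_congr_right fun hθ => ?_)
    rw [h hk (x.1 - θ, x.2) ⟨sub_nonneg.2 hθ, hx.2⟩]
  · rfl

theorem isTest_of_contDiff {a b : ℝ} {φ : ℝ × ℝ × ℝ → ℝ} (hφ : ContDiff ℝ 2 φ) :
    IsTest a b fun t x y => φ (t, x, y) :=
  ⟨univ, isOpen_univ, subset_univ _, hφ.contDiffOn⟩

namespace IsQVISol

theorem isStageSub (hu : IsQVISol C r μ σ K T w G u) (hk : 1 ≤ k) (hkK : k ≤ K)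
    (hcont : ContinuousOn (fun q : ℝ × ℝ × ℝ => u k q.1 q.2) (Icc (T (k - 1)) (T k) ×ˢ Sbar))
    (hle : ∀ t ∈ Icc (T (k - 1)) (T k), ∀ x ∈ Sbar, u k t x ≤ W) :
    IsStageSub C r μ σ (T (k - 1)) (T k) W (deadlineValue C K T w G u k) (u k) where
  continuousOn := hcont
  le_bound q hq := hle q.1 hq.1 q.2 hq.2
  interior p hp φ hφ hmax := (hu.1 k hk hkK p.1 p.2 ⟨hp.1, hp.2.1⟩ hp.2.2 _
    (isTest_of_contDiff hφ)).1 fun t ht x hx => hmax (a := (t, x)) ⟨ht.1, ht.2, hx⟩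
  terminal x hx := by
    rcases hkK.lt_or_eq with hlt | rfl
    · simpa only [deadlineValue, if_pos hlt] using (hu.2.1 k hk hlt x hx).1
    · simpa only [deadlineValue, if_neg (lt_irrefl k)] using (hu.2.2.1 x hx).1

theorem isStageSuper (hv : IsQVISol C r μ σ K T w G v) (hk : 1 ≤ k) (hkK : k ≤ K)
    (hcont : ContinuousOn (fun q : ℝ × ℝ × ℝ => v k q.1 q.2) (Icc (T (k - 1)) (T k) ×ˢ Sbar))
    (hle : ∃ m, ∀ t ∈ Icc (T (k - 1)) (T k), ∀ x ∈ Sbar, m ≤ v k t x) :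
    IsStageSuper C r μ σ (T (k - 1)) (T k) (∑ i ∈ Finset.Icc k K, w i * G i)
      (deadlineValue C K T w G v k) (v k) where
  continuousOn := hcont
  exists_le := hle.imp fun _ hm q hq => hm q.1 hq.1 q.2 hq.2
  le_origin t ht := (hv.2.2.2 k hk hkK t ht).ge
  interior p hp φ hφ hmin := (hv.1 k hk hkK p.1 p.2 ⟨hp.1, hp.2.1⟩ hp.2.2 _
    (isTest_of_contDiff hφ)).2 fun t ht x hx => hmin (a := (t, x)) ⟨ht.1, ht.2, hx⟩
  terminal x hx := by
    rcases hkK.lt_or_eq with hlt | rfl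
    · simpa only [deadlineValue, if_pos hlt] using (hv.2.1 k hk hlt x hx).2
    · simpa only [deadlineValue, if_neg (lt_irrefl k)] using (hv.2.2.1 x hx).2

theorem le_of_next_eq (hC : Continuous C) (hpos : ∀ d, 0 < C d)
    (hmono : StrictMono fun d => d + C d) (hσ : σ ≠ 0)
    (hu : IsQVISol C r μ σ K T w G u) (hv : IsQVISol C r μ σ K T w G v) (hk : 1 ≤ k) (hkK : k ≤ K)
    (hu_cont : ContinuousOn (fun q : ℝ × ℝ × ℝ => u k q.1 q.2) (Icc (T (k - 1)) (T k) ×ˢ Sbar))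
    (hv_cont : ContinuousOn (fun q : ℝ × ℝ × ℝ => v k q.1 q.2) (Icc (T (k - 1)) (T k) ×ˢ Sbar))
    (hu_le : ∀ t ∈ Icc (T (k - 1)) (T k), ∀ x ∈ Sbar,
      u k t x ≤ ∑ i ∈ Finset.Icc k K, w i * G i)
    (hv_ge : ∃ m, ∀ t ∈ Icc (T (k - 1)) (T k), ∀ x ∈ Sbar, m ≤ v k t x)
    (hnext : k < K → ∀ y ∈ Sbar, u (k + 1) (T k) y = v (k + 1) (T k) y)
    {t : ℝ} (ht : t ∈ Icc (T (k - 1)) (T k)) (hx : x ∈ Sbar) : u k t x ≤ v k t x :=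
  (hu.isStageSub hk hkK hu_cont hu_le).le (p := (t, x)) hC hpos hmono hσ
    (hv.isStageSuper hk hkK hv_cont hv_ge) (fun _ hy => (deadlineValue_congr hy.1 hnext).le)
    ⟨ht, hx⟩

end IsQVISol

end Array

theorem qvi_uniqueness_general {C : ℝ → ℝ} (hC : Continuous C) (hpos : ∀ d, 0 < C d)
    (hmono : StrictMono fun d => d + C d) {r μ σ : ℝ} (hσ : σ ≠ 0) {K : ℕ} {T w G : ℕ → ℝ}
    (hT : ∀ k < K, T k ≤ T (k + 1)) {u v : ℕ → ℝ → ℝ × ℝ → ℝ}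
    (hu_cont : ∀ k, 1 ≤ k → k ≤ K →
      ContinuousOn (fun q : ℝ × ℝ × ℝ => u k q.1 q.2) (Icc (T (k - 1)) (T k) ×ˢ Sbar))
    (hv_cont : ∀ k, 1 ≤ k → k ≤ K →
      ContinuousOn (fun q : ℝ × ℝ × ℝ => v k q.1 q.2) (Icc (T (k - 1)) (T k) ×ˢ Sbar))
    (hu_bd : ∀ k, 1 ≤ k → k ≤ K → ∃ m, ∀ t ∈ Icc (T (k - 1)) (T k), ∀ x ∈ Sbar,
      m ≤ u k t x ∧ u k t x ≤ ∑ i ∈ Finset.Icc k K, w i * G i)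
    (hv_bd : ∀ k, 1 ≤ k → k ≤ K → ∃ m, ∀ t ∈ Icc (T (k - 1)) (T k), ∀ x ∈ Sbar,
      m ≤ v k t x ∧ v k t x ≤ ∑ i ∈ Finset.Icc k K, w i * G i)
    (hu : IsQVISol C r μ σ K T w G u) (hv : IsQVISol C r μ σ K T w G v)
    (k : ℕ) (hk : 1 ≤ k) (hkK : k ≤ K) (t : ℝ) (ht : t ∈ Icc (T (k - 1)) (T k)) (x : ℝ × ℝ)
    (hx : x ∈ Sbar) : u k t x = v k t x := by
  have stage {k : ℕ} (hk : 1 ≤ k) (hkK : k ≤ K)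
      (hnext : k < K → ∀ y ∈ Sbar, u (k + 1) (T k) y = v (k + 1) (T k) y)
      {t : ℝ} (ht : t ∈ Icc (T (k - 1)) (T k)) {x : ℝ × ℝ} (hx : x ∈ Sbar) :
      u k t x = v k t x := by
    obtain ⟨mu, hmu⟩ := hu_bd k hk hkK
    obtain ⟨mv, hmv⟩ := hv_bd k hk hkK
    apply le_antisymm
    · exact hu.le_of_next_eq hC hpos hmono hσ hv hk hkK (hu_cont k hk hkK) (hv_cont k hk hkK)
        (fun t ht x hx => (hmu t ht x hx).2) ⟨mv, fun t ht x hx => (hmv t ht x hx).1⟩ hnext ht hx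
    · exact hv.le_of_next_eq hC hpos hmono hσ hu hk hkK (hv_cont k hk hkK) (hu_cont k hk hkK)
        (fun t ht x hx => (hmv t ht x hx).2) ⟨mu, fun t ht x hx => (hmu t ht x hx).1⟩
        (fun h y hy => (hnext h y hy).symm) ht hx
  induction hkK using Nat.decreasingInduction generalizing t x with
  | self => exact stage hk le_rfl (fun h => absurd h (lt_irrefl K)) ht hx
  | of_succ k hkK ih =>
    exact stage hk hkK.le (fun _ => ih (Nat.le_add_left 1 k) (T k) ⟨le_rfl, hT k hkK⟩) ht hx

/-- (Uniqueness part of Theorem 3.1: two continuous, suitably bounded viscosity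
solutions of the QVI system coincide on the whole domain.) -/
theorem qvi_uniqueness
    (C : ℝ → ℝ) (hC : IsCostFn C)
    (r μ σ : ℝ) (hσ : 0 < σ)
    (K : ℕ) (hK : 1 ≤ K)
    (T : ℕ → ℝ) (hT0 : T 0 = 0) (hT : ∀ k, k < K → T k < T (k + 1))
    (w G : ℕ → ℝ)
    (hw : ∀ k, 1 ≤ k → k ≤ K → 0 < w k) (hG : ∀ k, 1 ≤ k → k ≤ K → 0 < G k)
    (u v : ℕ → ℝ → ℝ × ℝ → ℝ)
    (hu_cont : ∀ k, 1 ≤ k → k ≤ K →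
      ContinuousOn (fun p : ℝ × (ℝ × ℝ) => u k p.1 p.2)
        (Set.Icc (T (k - 1)) (T k) ×ˢ Sbar))
    (hv_cont : ∀ k, 1 ≤ k → k ≤ K →
      ContinuousOn (fun p : ℝ × (ℝ × ℝ) => v k p.1 p.2)
        (Set.Icc (T (k - 1)) (T k) ×ˢ Sbar))
    (hu_bd : ∀ k, 1 ≤ k → k ≤ K → ∀ t ∈ Set.Icc (T (k - 1)) (T k), ∀ x ∈ Sbar,
      0 ≤ u k t x ∧ u k t x ≤ ∑ i ∈ Finset.Icc k K, w i * G i)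
    (hv_bd : ∀ k, 1 ≤ k → k ≤ K → ∀ t ∈ Set.Icc (T (k - 1)) (T k), ∀ x ∈ Sbar,
      0 ≤ v k t x ∧ v k t x ≤ ∑ i ∈ Finset.Icc k K, w i * G i)
    (hu_sol : IsQVISol C r μ σ K T w G u)
    (hv_sol : IsQVISol C r μ σ K T w G v) :
    ∀ k, 1 ≤ k → k ≤ K → ∀ t ∈ Set.Icc (T (k - 1)) (T k), ∀ x ∈ Sbar,
      u k t x = v k t x := by
  exact qvi_uniqueness_general hC.1 (fun d => hC.2.2.1.trans_le (hC.2.1 0 d (by simp)))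
    hC.2.2.2.1 hσ.ne' (fun k hk => (hT k hk).le) hu_cont hv_cont
    (fun k h h' => ⟨0, hu_bd k h h'⟩) (fun k h h' => ⟨0, hv_bd k h h'⟩) hu_sol hv_sol
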